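/- (Capacity comparison for unions of well-separated boxes.) For every δ > 0 there exist K_0 and L_1 such that for all integers K ≥ K_0 and L ≥ L_1 and every nonempty finite set 𝒞 ⊆ Lℤ^d whose points are at mutual sup-distance at least KL, one has (1 − δ) ≤ d · cap_{ℤ^d}(C) / cap(Γ) ≤ (1 + δ), where C = ∪_{z∈𝒞} B_z and Γ = ∪_{z∈𝒞} B̂_z. Equivalently, liminf_{K,L→∞} inf_𝒞 d·cap_{ℤ^d}(C)/cap(Γ) ≥ 1 and limsup_{K,L→∞} sup_𝒞 d·cap_{ℤ^d}(C)/cap(Γ) ≤ 1, the infimum and supremum being over all such 𝒞. -/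

import Mathlib

open MeasureTheory Set
open scoped ENNReal

noncomputable section

/-- `n`-step transition probability of the simple random walk on `ℤ^d` started at `0`. -/
def srwP (d : ℕ) : ℕ → (Fin d → ℤ) → ℝ
  | 0, x => if x = 0 then 1 else 0
  | n + 1, x =>
      (∑ i : Fin d, (srwP d n (x + Pi.single i 1) + srwP d n (x - Pi.single i 1))) / (2 * d)

/-- the Green function `g̃(x)` of the simple random walk on `ℤ^d`: the expected number of
visits to `x` starting from `0`. -/
def greenZ (d : ℕ) (x : Fin d → ℤ) : ℝ := ∑' n : ℕ, srwP d n x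

/-- the simple random walk capacity of a finite set `F ⊆ ℤ^d`: the capacity attached to the
discrete Green function `g̃`, i.e. the inverse of the minimal `g̃`-energy of probability
weights carried by `F`. -/
def discCap (d : ℕ) (F : Finset (Fin d → ℤ)) : ℝ :=
  (sInf {e : ℝ | ∃ w : (Fin d → ℤ) → ℝ, (∀ x, 0 ≤ w x) ∧ (∀ x ∉ F, w x = 0) ∧
      (∑ x ∈ F, w x) = 1 ∧ e = ∑ x ∈ F, ∑ y ∈ F, greenZ d (y - x) * w x * w y})⁻¹

/-- the normalizing constant of the Brownian Green function. -/
def greenK (d : ℕ) : ℝ := Real.Gamma ((d:ℝ)/2 - 1) / (2 * Real.pi ^ ((d:ℝ)/2))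

/-- the Brownian Green function `g(x,y)` of `ℝ^d` (Euclidean distance), valued in `ℝ≥0∞`. -/
def greenE (d : ℕ) (x y : Fin d → ℝ) : ℝ≥0∞ :=
  if x = y then ⊤
  else ENNReal.ofReal (greenK d * Real.sqrt (∑ i, (x i - y i)^2) ^ (2 - (d:ℝ)))

/-- the Brownian (Newtonian) capacity. -/
def brCap (d : ℕ) (A : Set (Fin d → ℝ)) : ℝ≥0∞ :=
  (⨅ μ ∈ {μ : Measure (Fin d → ℝ) | IsProbabilityMeasure μ ∧ μ Aᶜ = 0},
    ∫⁻ x, ∫⁻ y, greenE d x y ∂μ ∂μ)⁻¹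

/-- the discrete `L`-box `B_z = z + [0,L)^d ∩ ℤ^d`. -/
def boxZ (d L : ℕ) (z : Fin d → ℤ) : Finset (Fin d → ℤ) :=
  Finset.Icc z (fun i => z i + L - 1)

/-- the `ℝ^d`-filling `B̂_z = z + [0,L]^d`. -/
def boxR (d L : ℕ) (z : Fin d → ℤ) : Set (Fin d → ℝ) :=
  Set.Icc (fun i => (z i : ℝ)) (fun i => (z i : ℝ) + L)


/-- normalized Lebesgue measure on `(-π, π]`. -/
def mOne : Measure ℝ := (ENNReal.ofReal (2 * Real.pi))⁻¹ • volume.restrict (Ioc (-Real.pi) Real.pi)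

instance mOne_prob : IsProbabilityMeasure mOne := by
  constructor
  have h : (0:ℝ) < 2 * Real.pi := by positivity
  simp only [mOne, Measure.smul_apply, Measure.restrict_apply_univ, Real.volume_Ioc, smul_eq_mul]
  rw [show Real.pi - -Real.pi = 2 * Real.pi by ring]
  exact ENNReal.inv_mul_cancel (by simpa using Real.pi_pos) ENNReal.ofReal_ne_top

lemma integral_mOne {E : Type*} [NormedAddCommGroup E] [NormedSpace ℝ E] (f : ℝ → E) :
    ∫ θ, f θ ∂mOne = (2 * Real.pi)⁻¹ • ∫ θ in (-Real.pi)..Real.pi, f θ := by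
  have h : (0:ℝ) < 2 * Real.pi := by positivity
  rw [mOne, integral_smul_measure, intervalIntegral.integral_of_le (by linarith [Real.pi_pos]),
    ENNReal.toReal_inv, ENNReal.toReal_ofReal h.le]

lemma integral_cexp_mOne (k : ℤ) :
    ∫ θ, Complex.exp (Complex.I * k * (θ:ℂ)) ∂mOne = if k = 0 then 1 else 0 := by
  split_ifs with h
  · subst h; simp
  · rw [integral_mOne, integral_exp_mul_complex (by simp [h])]
    have : Complex.exp (Complex.I * k * ((Real.pi:ℝ):ℂ)) =
        Complex.exp (Complex.I * k * ((-Real.pi:ℝ):ℂ)) := by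
      rw [Complex.exp_eq_exp_iff_exists_int]
      exact ⟨k, by push_cast; ring⟩
    rw [this]; simp

/-- one-dimensional continuous time heat kernel via Fourier. -/
def qk (t : ℝ) (k : ℤ) : ℂ :=
  ∫ θ, ((Real.exp (-(t * (1 - Real.cos θ))) : ℝ) : ℂ) * Complex.exp (Complex.I * k * (θ:ℂ)) ∂mOne

def mPi (d : ℕ) : Measure (Fin d → ℝ) := Measure.pi (fun _ => mOne)

instance (d : ℕ) : IsProbabilityMeasure (mPi d) := by unfold mPi; infer_instance

def chr {d : ℕ} (x : Fin d → ℤ) (θ : Fin d → ℝ) : ℂ :=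
  ∏ i, Complex.exp (Complex.I * x i * (θ i : ℂ))

lemma norm_chr {d : ℕ} (x : Fin d → ℤ) (θ : Fin d → ℝ) : ‖chr x θ‖ = 1 := by
  unfold chr
  rw [norm_prod]
  apply Finset.prod_eq_one
  intro i _
  rw [show Complex.I * x i * (θ i : ℂ) = ((x i * θ i : ℝ):ℂ) * Complex.I by push_cast; ring]
  exact Complex.norm_exp_ofReal_mul_I _

lemma continuous_chr {d : ℕ} (x : Fin d → ℤ) : Continuous (chr x) := by
  unfold chr; fun_prop

lemma chr_add {d : ℕ} (x y : Fin d → ℤ) (θ : Fin d → ℝ) : chr (x + y) θ = chr x θ * chr y θ := by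
  unfold chr
  rw [← Finset.prod_mul_distrib]
  refine Finset.prod_congr rfl fun i _ => ?_
  rw [← Complex.exp_add]; congr 1; simp; ring

lemma chr_single {d : ℕ} (i : Fin d) (a : ℤ) (θ : Fin d → ℝ) :
    chr (Pi.single i a) θ = Complex.exp (Complex.I * a * (θ i : ℂ)) := by
  unfold chr
  rw [Finset.prod_eq_single i]
  · simp
  · intro j _ hj; simp [Pi.single_eq_of_ne hj]
  · simp

def phi {d : ℕ} (θ : Fin d → ℝ) : ℝ := (∑ i, Real.cos (θ i)) / d

lemma continuous_phi {d : ℕ} : Continuous (phi (d := d)) := by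
  unfold phi; fun_prop

lemma abs_phi_le {d : ℕ} (θ : Fin d → ℝ) : |phi θ| ≤ 1 := by
  unfold phi
  rw [abs_div, Nat.abs_cast]
  apply div_le_one_of_le₀ _ (by positivity)
  calc |∑ i, Real.cos (θ i)| ≤ ∑ i : Fin d, |Real.cos (θ i)| := Finset.abs_sum_le_sum_abs _ _
    _ ≤ ∑ i : Fin d, 1 := Finset.sum_le_sum fun i _ => Real.abs_cos_le_one _
    _ = d := by simp

lemma integrable_phi_chr {d : ℕ} (n : ℕ) (x : Fin d → ℤ) :
    Integrable (fun θ => ((phi θ : ℂ)) ^ n * chr x θ) (mPi d) := by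
  apply Integrable.of_bound (C := 1)
  · apply Continuous.aestronglyMeasurable
    have := continuous_chr x
    have := continuous_phi (d := d)
    fun_prop
  · refine Filter.Eventually.of_forall fun θ => ?_
    rw [norm_mul, norm_chr, mul_one, norm_pow, Complex.norm_real]
    exact pow_le_one₀ (norm_nonneg _) (abs_phi_le θ)

lemma chr_step {d : ℕ} (hd : 0 < d) (x : Fin d → ℤ) (θ : Fin d → ℝ) :
    (∑ i : Fin d, (chr (x + Pi.single i 1) θ + chr (x - Pi.single i 1) θ)) / (2 * d)
      = phi θ * chr x θ := by
  have h : ∀ i : Fin d, chr (x + Pi.single i 1) θ + chr (x - Pi.single i 1) θ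
      = 2 * (Real.cos (θ i) : ℂ) * chr x θ := by
    intro i
    rw [sub_eq_add_neg, ← Pi.single_neg, chr_add, chr_add, chr_single, chr_single,
      Complex.ofReal_cos, Complex.two_cos]
    push_cast
    rw [show (θ i : ℂ) * Complex.I = Complex.I * 1 * θ i by ring,
      show -(θ i : ℂ) * Complex.I = Complex.I * -1 * θ i by ring]
    ring
  simp_rw [h]
  rw [← Finset.sum_mul, ← Finset.mul_sum, phi]
  have : (d:ℂ) ≠ 0 := by exact_mod_cast hd.ne'
  push_cast
  field_simp

lemma srwP_fourier {d : ℕ} (hd : 0 < d) (n : ℕ) (x : Fin d → ℤ) :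
    ((srwP d n x : ℝ) : ℂ) = ∫ θ, ((phi θ : ℂ)) ^ n * chr x θ ∂(mPi d) := by
  induction n generalizing x with
  | zero =>
    simp only [pow_zero, one_mul, srwP]
    unfold chr mPi
    rw [integral_fintype_prod_eq_prod
      (f := fun i (θ : ℝ) => Complex.exp (Complex.I * x i * (θ : ℂ)))]
    simp_rw [integral_cexp_mOne]
    by_cases h : x = 0
    · subst h; simp
    · obtain ⟨i, hi⟩ := Function.ne_iff.mp h
      rw [Finset.prod_eq_zero (Finset.mem_univ i) (by simpa using hi)]
      simp [h]
  | succ n ih =>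
    simp only [srwP]
    push_cast
    simp_rw [ih]
    have : ∀ i : Fin d, (∫ θ, ((phi θ : ℂ)) ^ n * chr (x + Pi.single i 1) θ ∂(mPi d)) +
        (∫ θ, ((phi θ : ℂ)) ^ n * chr (x - Pi.single i 1) θ ∂(mPi d)) =
        ∫ θ, ((phi θ : ℂ)) ^ n * (chr (x + Pi.single i 1) θ + chr (x - Pi.single i 1) θ)
          ∂(mPi d) := by
      intro i
      rw [← integral_add (integrable_phi_chr _ _) (integrable_phi_chr _ _)]
      simp_rw [mul_add]
    simp_rw [this]
    rw [← integral_finsetSum, ← integral_div]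
    · congr 1; ext θ
      rw [← Finset.mul_sum, mul_div_assoc, chr_step hd, pow_succ]; ring
    · intro i _
      simp_rw [mul_add]
      exact (integrable_phi_chr _ _).add (integrable_phi_chr _ _)

lemma srwP_nonneg (d n : ℕ) (x : Fin d → ℤ) : 0 ≤ srwP d n x := by
  induction n generalizing x with
  | zero => simp only [srwP]; split_ifs <;> norm_num
  | succ n ih =>
    simp only [srwP]
    exact div_nonneg (Finset.sum_nonneg fun i _ => add_nonneg (ih _) (ih _)) (by positivity)

/-- continuous-time heat kernel on `ℤ^d` (each coordinate jumping at rate one). -/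
lemma hasSum_heat {d : ℕ} (hd : 0 < d) (t : ℝ) (x : Fin d → ℤ) :
    HasSum (fun n : ℕ => ((Real.exp (-(d * t)) * ((d * t) ^ n / n.factorial) * srwP d n x : ℝ) : ℂ))
      (∏ i, qk t (x i)) := by
  have h1 : ∏ i, qk t (x i) = ∫ θ, ∑' n : ℕ, (Real.exp (-(d * t)) : ℂ) *
      ((d * t) ^ n / n.factorial) * ((phi θ : ℂ) ^ n * chr x θ) ∂(mPi d) := by
    unfold qk mPi
    rw [← integral_fintype_prod_eq_prod
      (f := fun i (θ : ℝ) => ((Real.exp (-(t * (1 - Real.cos θ))) : ℝ) : ℂ) *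
        Complex.exp (Complex.I * x i * (θ:ℂ)))]
    congr 1; ext θ
    rw [Finset.prod_mul_distrib, ← chr, ← Complex.ofReal_prod, ← Real.exp_sum]
    have h2 : ∑ i, -(t * (1 - Real.cos (θ i))) = -(d * t) + d * t * phi θ := by
      have : (d:ℝ) ≠ 0 := by exact_mod_cast hd.ne'
      rw [phi, Finset.sum_neg_distrib, ← Finset.mul_sum, Finset.sum_sub_distrib]
      simp; field_simp; ring
    rw [h2, Real.exp_add]
    have h3 : HasSum (fun n : ℕ => (d * t * phi θ : ℂ) ^ n / n.factorial)
      (Complex.exp (d * t * phi θ)) := by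
      rw [Complex.exp_eq_exp_ℂ]; exact NormedSpace.expSeries_div_hasSum_exp _
    have h4 := (h3.mul_left (Real.exp (-(d*t)) : ℂ)).mul_right (chr x θ)
    symm
    apply HasSum.tsum_eq
    push_cast at h4 ⊢
    have hfun : (fun n : ℕ => Complex.exp (-((d:ℂ) * t)) * ((d * t) ^ n / n.factorial) *
        ((phi θ : ℂ) ^ n * chr x θ)) = fun n : ℕ => Complex.exp (-((d:ℂ) * t)) *
        ((d * t * phi θ) ^ n / n.factorial) * chr x θ := by
      ext n
      rw [mul_pow (d * t : ℂ)]; ring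
    rw [hfun]
    exact h4
  rw [h1]
  have key := hasSum_integral_of_summable_integral_norm (μ := mPi d)
    (F := fun (n : ℕ) θ => (Real.exp (-(d * t)) : ℂ) *
      ((d * t) ^ n / n.factorial) * ((phi θ : ℂ) ^ n * chr x θ)) ?_ ?_
  · have hfun : (fun n : ℕ => ((Real.exp (-(d * t)) * ((d * t) ^ n / n.factorial) * srwP d n x : ℝ) : ℂ))
        = fun n : ℕ => ∫ θ, (Real.exp (-(d * t)) : ℂ) *
      ((d * t) ^ n / n.factorial) * ((phi θ : ℂ) ^ n * chr x θ) ∂(mPi d) := ?_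
    · rw [hfun]; exact key
    ext n
    rw [integral_const_mul, ← srwP_fourier hd]
    push_cast; ring
  · intro n
    exact (integrable_phi_chr n x).const_mul _
  · have hs : Summable (fun n : ℕ => Real.exp (-(d * t)) * ((|d * t|) ^ n / n.factorial)) :=
      (Real.summable_pow_div_factorial _).mul_left _
    refine Summable.of_nonneg_of_le (fun n => integral_nonneg fun θ => norm_nonneg _) (fun n => ?_) hs
    calc _ ≤ ∫ θ, Real.exp (-(d * t)) * ((|d * t|) ^ n / n.factorial) ∂(mPi d) := by
          apply integral_mono
          · exact ((integrable_phi_chr n x).const_mul _).norm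
          · exact integrable_const _
          · intro θ
            simp only [norm_mul, norm_chr, norm_pow, norm_div, Complex.norm_real, mul_one, Complex.norm_natCast]
            rw [Real.norm_of_nonneg (Real.exp_pos _).le]
            have := pow_le_one₀ (n := n) (abs_nonneg _) (abs_phi_le θ)
            simp only [Real.norm_eq_abs, abs_mul, Nat.abs_cast] at this ⊢
            exact mul_le_of_le_one_right (by positivity) this
      _ = _ := by simp

/-- Green function as a time integral (extended version). -/
lemma lintegral_heat {d : ℕ} (hd : 0 < d) (x : Fin d → ℤ) :
    ∫⁻ t in Ioi (0:ℝ), ENNReal.ofReal (‖∏ i, qk t (x i)‖)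
      = (d:ℝ≥0∞)⁻¹ * ∑' n, ENNReal.ofReal (srwP d n x) := by
  have hdr : (0:ℝ) < d := by exact_mod_cast hd
  have h1 : ∀ t ∈ Ioi (0:ℝ), ENNReal.ofReal (‖∏ i, qk t (x i)‖) =
      ∑' n : ℕ, ENNReal.ofReal
        (Real.exp (-(d * t)) * ((d * t) ^ n / n.factorial) * srwP d n x) := by
    intro t ht
    have ht' : 0 < t := ht
    have h := hasSum_heat hd t x
    have hnn : ∀ n : ℕ, 0 ≤ Real.exp (-(d * t)) * ((d * t) ^ n / n.factorial) * srwP d n x :=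
      fun n => mul_nonneg (by positivity) (srwP_nonneg _ _ _)
    have hr := Complex.hasSum_re h
    simp only [Complex.ofReal_re] at hr
    have h' := Complex.hasSum_ofReal.mpr hr
    have he := h.unique h'
    rw [he, Complex.norm_real, Real.norm_of_nonneg (hr.nonneg hnn), ← hr.tsum_eq,
      ENNReal.ofReal_tsum_of_nonneg hnn hr.summable]
  rw [setLIntegral_congr_fun measurableSet_Ioi h1, lintegral_tsum]
  · rw [← ENNReal.tsum_mul_left]
    congr 1; ext n
    have h2 : ∀ t : ℝ, t ∈ Ioi (0:ℝ) → ENNReal.ofReal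
        (Real.exp (-(d * t)) * ((d * t) ^ n / n.factorial) * srwP d n x) =
        ENNReal.ofReal (d ^ n / n.factorial * (t ^ ((n + 1 : ℝ) - 1) * Real.exp (-(d * t)))) *
          ENNReal.ofReal (srwP d n x) := by
      intro t ht
      rw [ENNReal.ofReal_mul' (srwP_nonneg _ _ _)]
      congr 2
      rw [add_sub_cancel_right, Real.rpow_natCast]; ring
    rw [setLIntegral_congr_fun measurableSet_Ioi h2, lintegral_mul_const' _ _ (by simp)]
    congr 1
    have h3 := Real.integral_rpow_mul_exp_neg_mul_Ioi (a := n + 1) (r := d) (by positivity) hdr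
    have h4 : 0 < Real.Gamma (n + 1) := Real.Gamma_pos_of_pos (by positivity)
    have hIntg : IntegrableOn (fun t : ℝ => t ^ ((n + 1 : ℝ) - 1) * Real.exp (-(d * t))) (Ioi 0) := by
      by_contra hcon
      rw [integral_undef hcon] at h3
      have : 0 < (1 / (d:ℝ)) ^ ((n:ℝ) + 1) * Real.Gamma (n + 1) := by positivity
      linarith
    rw [← ofReal_integral_eq_lintegral_ofReal (hIntg.const_mul _)]
    · rw [integral_const_mul, h3, Real.Gamma_nat_eq_factorial]
      rw [← ENNReal.ofReal_natCast, ← ENNReal.ofReal_inv_of_pos hdr]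
      congr 1
      rw [show ((n:ℝ) + 1) = ((n + 1 : ℕ) : ℝ) by push_cast; ring, Real.rpow_natCast]
      field_simp
      rw [← pow_succ, ← mul_pow, mul_one_div_cancel hdr.ne', one_pow]
    · filter_upwards [self_mem_ae_restrict measurableSet_Ioi] with t ht
      have : 0 < t := ht
      simp only [Pi.zero_apply]
      positivity
  · intro n
    apply Measurable.aemeasurable
    fun_prop

def fq (t : ℝ) (k : ℤ) (z : ℂ) : ℂ := Complex.exp (t * ((z + z⁻¹) / 2 - 1)) * z ^ k

lemma fq_circle_const (t : ℝ) (k : ℤ) {r R : ℝ} (hr : 0 < r) (hR : r ≤ R) :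
    ∫ θ in (0:ℝ)..(2 * Real.pi), fq t k (circleMap 0 R θ) =
    ∫ θ in (0:ℝ)..(2 * Real.pi), fq t k (circleMap 0 r θ) := by
  have h := Complex.circleIntegral_sub_center_inv_smul_eq_of_differentiable_on_annulus_off_countable
    (c := 0) (f := fq t k) hr hR (s := ∅) (by simp) ?_ ?_
  · have e : ∀ ρ : ℝ, 0 < ρ → (∮ z in C(0, ρ), (z - 0)⁻¹ • fq t k z) =
        Complex.I * ∫ θ in (0:ℝ)..(2 * Real.pi), fq t k (circleMap 0 ρ θ) := by
      intro ρ hρ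
      rw [circleIntegral, ← intervalIntegral.integral_const_mul]
      congr 1; ext θ
      have : circleMap 0 ρ θ ≠ 0 := circleMap_ne_center hρ.ne'
      simp only [deriv_circleMap, smul_eq_mul, sub_zero]
      field_simp
    rw [e R (by linarith), e r hr] at h
    exact mul_left_cancel₀ Complex.I_ne_zero h
  · intro z hz
    have hz0 : z ≠ 0 := by
      rintro rfl
      exact hz.2 (by simpa using hr)
    unfold fq
    apply ContinuousAt.continuousWithinAt
    have h1 : ContinuousAt (fun z : ℂ => z⁻¹) z := continuousAt_inv₀ hz0
    have h2 : ContinuousAt (fun z : ℂ => z ^ k) z := continuousAt_zpow₀ z k (Or.inl hz0)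
    fun_prop
  · intro z hz
    have hz0 : z ≠ 0 := by
      rintro rfl
      exact hz.1.2 (by simpa using hr.le)
    unfold fq
    have h1 : DifferentiableAt ℂ (fun z : ℂ => z⁻¹) z := differentiableAt_inv hz0
    have h2 : DifferentiableAt ℂ (fun z : ℂ => z ^ k) z := differentiableAt_zpow.mpr (Or.inl hz0)
    fun_prop

lemma fq_circle_const' (t : ℝ) (k : ℤ) {r R : ℝ} (hr : 0 < r) (hR : 0 < R) :
    ∫ θ in (0:ℝ)..(2 * Real.pi), fq t k (circleMap 0 R θ) =
    ∫ θ in (0:ℝ)..(2 * Real.pi), fq t k (circleMap 0 r θ) := by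
  rcases le_total r R with h | h
  · exact fq_circle_const t k hr h
  · exact (fq_circle_const t k hR h).symm

lemma circleMap_exp (l θ : ℝ) : circleMap 0 (Real.exp l) θ = Complex.exp (l + θ * Complex.I) := by
  rw [circleMap_zero, Complex.exp_add, Complex.ofReal_exp]

lemma fq_one (t : ℝ) (k : ℤ) (θ : ℝ) : fq t k (circleMap 0 1 θ) =
    ((Real.exp (-(t * (1 - Real.cos θ))) : ℝ) : ℂ) * Complex.exp (Complex.I * k * (θ:ℂ)) := by
  have h := circleMap_exp 0 θ
  rw [Real.exp_zero] at h
  rw [h, fq, ← Complex.exp_neg, ← Complex.exp_int_mul]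
  push_cast
  rw [zero_add]
  have h2 := Complex.two_cos (θ:ℂ)
  rw [neg_mul] at h2
  rw [← h2]
  congr 2 <;> ring

lemma norm_fq (t : ℝ) (k : ℤ) (l θ : ℝ) : ‖fq t k (circleMap 0 (Real.exp l) θ)‖ =
    Real.exp (l * k + t * (Real.cosh l - 1)) * Real.exp (-(t * Real.cosh l * (1 - Real.cos θ))) := by
  rw [circleMap_exp, fq, ← Complex.exp_neg, ← Complex.exp_int_mul, norm_mul, Complex.norm_exp,
    Complex.norm_exp, ← Real.exp_add, ← Real.exp_add]
  congr 1
  have h3 : ((t:ℂ) * ((Complex.exp (l + θ * Complex.I) + Complex.exp (-(l + θ * Complex.I))) / 2 - 1)).re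
      = t * (Real.cosh l * Real.cos θ - 1) := by
    rw [Complex.re_ofReal_mul]
    congr 1
    have : (Complex.exp (l + θ * Complex.I) + Complex.exp (-(l + θ * Complex.I))) / 2
      = Complex.cosh (l + θ * Complex.I) := by rw [Complex.cosh]
    rw [this, Complex.cosh_add, Complex.cosh_mul_I, Complex.sinh_mul_I, ← Complex.ofReal_cosh,
      ← Complex.ofReal_sinh, ← Complex.ofReal_cos, ← Complex.ofReal_sin]
    simp [Complex.cos_ofReal_re]
  rw [h3]
  have h4 : ((k:ℂ) * (l + θ * Complex.I)).re = k * l := by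
    simp
  rw [h4]
  ring

lemma integral_mOne_circle {E : Type*} [NormedAddCommGroup E] [NormedSpace ℝ E] (f : ℝ → E)
    (hf : Function.Periodic f (2 * Real.pi)) :
    ∫ θ, f θ ∂mOne = (2 * Real.pi)⁻¹ • ∫ θ in (0:ℝ)..(2 * Real.pi), f θ := by
  rw [integral_mOne]
  congr 1
  have := hf.intervalIntegral_add_eq (-Real.pi) 0
  rw [zero_add, show -Real.pi + 2 * Real.pi = Real.pi by ring] at this
  exact this

lemma qk_eq (t : ℝ) (k : ℤ) (l : ℝ) :
    qk t k = ∫ θ, fq t k (circleMap 0 (Real.exp l) θ) ∂mOne := by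
  rw [integral_mOne_circle _ (fun θ => by rw [periodic_circleMap 0 _ θ]),
    fq_circle_const' t k (r := 1) one_pos (Real.exp_pos l),
    ← integral_mOne_circle _ (fun θ => by rw [periodic_circleMap 0 _ θ]), qk]
  simp_rw [fq_one]

/-- the on-diagonal integral -/
def Jint (t : ℝ) : ℝ := ∫ θ, Real.exp (-(t * (1 - Real.cos θ))) ∂mOne

lemma one_sub_cos_nonneg (θ : ℝ) : 0 ≤ 1 - Real.cos θ := by linarith [Real.cos_le_one θ]

lemma integrable_J {t : ℝ} (ht : 0 ≤ t) :
    Integrable (fun θ => Real.exp (-(t * (1 - Real.cos θ)))) mOne := by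
  apply Integrable.of_bound (C := 1)
  · exact (by fun_prop : Continuous _).aestronglyMeasurable
  · refine Filter.Eventually.of_forall fun θ => ?_
    rw [Real.norm_of_nonneg (Real.exp_pos _).le, Real.exp_le_one_iff]
    have := mul_nonneg ht (one_sub_cos_nonneg θ)
    linarith

lemma Jint_le_one {t : ℝ} (ht : 0 ≤ t) : Jint t ≤ 1 := by
  calc Jint t ≤ ∫ θ, (1:ℝ) ∂mOne := by
        apply integral_mono (integrable_J ht) (integrable_const _)
        intro θ
        show Real.exp _ ≤ 1
        rw [Real.exp_le_one_iff]
        have := mul_nonneg ht (one_sub_cos_nonneg θ)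
        linarith
    _ = 1 := by simp

lemma Jint_nonneg (t : ℝ) : 0 ≤ Jint t := integral_nonneg fun _ => (Real.exp_pos _).le

lemma Jint_le {t : ℝ} (ht : 0 < t) : Jint t ≤ 2 / Real.sqrt t := by
  have hb : 0 < 2 / Real.pi ^ 2 * t := by positivity
  rw [Jint, integral_mOne, intervalIntegral.integral_of_le (by linarith [Real.pi_pos]), smul_eq_mul]
  have h1 : ∫ θ in Ioc (-Real.pi) Real.pi, Real.exp (-(t * (1 - Real.cos θ))) ≤
      ∫ θ in Ioc (-Real.pi) Real.pi, Real.exp (-(2 / Real.pi ^ 2 * t) * θ ^ 2) := by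
    apply setIntegral_mono_on
    · exact (by fun_prop : Continuous _).integrableOn_Ioc
    · exact (by fun_prop : Continuous _).integrableOn_Ioc
    · exact measurableSet_Ioc
    · intro θ hθ
      apply Real.exp_le_exp.mpr
      have := Real.cos_le_one_sub_mul_cos_sq (abs_le.2 (Ioc_subset_Icc_self hθ))
      nlinarith
  have h2 : ∫ θ in Ioc (-Real.pi) Real.pi, Real.exp (-(2 / Real.pi ^ 2 * t) * θ ^ 2) ≤
      ∫ θ, Real.exp (-(2 / Real.pi ^ 2 * t) * θ ^ 2) :=
    setIntegral_le_integral (integrable_exp_neg_mul_sq hb)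
      (Filter.Eventually.of_forall fun θ => (Real.exp_pos _).le)
  rw [integral_gaussian] at h2
  have h3 : Real.sqrt (Real.pi / (2 / Real.pi ^ 2 * t)) ≤ 4 * Real.pi / Real.sqrt t := by
    rw [Real.sqrt_le_left (by positivity), div_pow, Real.sq_sqrt ht.le]
    rw [div_le_div_iff₀ (by positivity) (by positivity)]
    have := Real.pi_pos
    have := Real.pi_le_four
    field_simp
    nlinarith
  calc _ ≤ (2 * Real.pi)⁻¹ * (4 * Real.pi / Real.sqrt t) := by
        gcongr; linarith
    _ = _ := by field_simp; norm_num

lemma norm_qk_le {t : ℝ} (ht : 0 ≤ t) (k : ℤ) (l : ℝ) :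
    ‖qk t k‖ ≤ Real.exp (l * k + t * (Real.cosh l - 1)) * Jint t := by
  rw [qk_eq t k l, Jint, ← integral_const_mul]
  apply norm_integral_le_of_norm_le ((integrable_J ht).const_mul _)
  refine Filter.Eventually.of_forall fun θ => ?_
  rw [norm_fq]
  refine mul_le_mul_of_nonneg_left (Real.exp_le_exp.mpr ?_) (Real.exp_pos _).le
  nlinarith [mul_nonneg (mul_nonneg ht (one_sub_cos_nonneg θ)) (sub_nonneg.2 (Real.one_le_cosh l))]

lemma norm_qk_le_abs {t : ℝ} (ht : 0 ≤ t) (k : ℤ) {l : ℝ} :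
    ‖qk t k‖ ≤ Real.exp (-(l * |(k:ℝ)|) + t * (Real.cosh l - 1)) * Jint t := by
  rcases abs_cases (k:ℝ) with h | h
  · have := norm_qk_le ht k (-l)
    rw [Real.cosh_neg] at this
    rw [h.1]; convert this using 4; ring
  · have := norm_qk_le ht k l
    rw [h.1]; convert this using 4; ring

lemma norm_qk_le_J {t : ℝ} (ht : 0 ≤ t) (k : ℤ) : ‖qk t k‖ ≤ Jint t := by
  simpa using norm_qk_le ht k 0

/-- off-diagonal bound, `t ≥ 1`. -/
lemma norm_qk_le_big {t : ℝ} (ht : 1 ≤ t) (k : ℤ) :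
    ‖qk t k‖ ≤ 6 / Real.sqrt t * Real.exp (-(|(k:ℝ)| / Real.sqrt t)) := by
  have h0 : 0 < t := by linarith
  have hs : 0 < Real.sqrt t := Real.sqrt_pos.2 h0
  have h := norm_qk_le_abs h0.le k (l := 1 / Real.sqrt t)
  have h1 : t * (Real.cosh (1 / Real.sqrt t) - 1) ≤ 1 := by
    have h2 := Real.cosh_le_exp_half_sq (1 / Real.sqrt t)
    rw [div_pow, Real.sq_sqrt h0.le, one_pow] at h2
    have hu : (1 / t / 2) ≤ 1 / 2 := by
      rw [div_div, div_le_div_iff₀ (by positivity) (by positivity)]; linarith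
    have hu0 : 0 < 1 / t / 2 := by positivity
    have h3 := Real.exp_bound_div_one_sub_of_interval hu0.le (by linarith)
    have h4 : 1 / (1 - 1 / t / 2) ≤ 1 + 1 / t := by
      rw [div_le_iff₀ (by linarith)]
      have : (1 / t) * (1 / t) ≤ 1 / t := by
        apply mul_le_of_le_one_left (by positivity)
        rw [div_le_one h0]; exact ht
      nlinarith
    calc t * (Real.cosh (1 / Real.sqrt t) - 1) ≤ t * (1 / t) := by gcongr; linarith
      _ = 1 := by field_simp
  have hJ := Jint_le h0
  calc ‖qk t k‖ ≤ _ := h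
    _ ≤ Real.exp (-(|(k:ℝ)| / Real.sqrt t) + 1) * (2 / Real.sqrt t) := by
        refine mul_le_mul (Real.exp_le_exp.mpr (add_le_add (le_of_eq (by ring)) h1)) hJ
          (Jint_nonneg _) (Real.exp_pos _).le
    _ = Real.exp 1 * 2 / Real.sqrt t * Real.exp (-(|(k:ℝ)| / Real.sqrt t)) := by
        rw [Real.exp_add]; ring
    _ ≤ _ := by
        gcongr
        linarith [Real.exp_one_lt_d9]

lemma norm_qk_le_small {t : ℝ} (ht0 : 0 ≤ t) (ht : t ≤ 1) (k : ℤ) :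
    ‖qk t k‖ ≤ 3 * Real.exp (-|(k:ℝ)|) := by
  have h := norm_qk_le_abs ht0 k (l := 1)
  have h1 : Real.cosh 1 ≤ 2 := by
    rw [Real.cosh_eq]
    have : Real.exp (-1) ≤ 1 := by rw [Real.exp_le_one_iff]; norm_num
    linarith [Real.exp_one_lt_d9]
  have h2 : t * (Real.cosh 1 - 1) ≤ 1 := by
    have := Real.one_le_cosh 1
    nlinarith
  calc _ ≤ _ := h
    _ ≤ Real.exp (-|(k:ℝ)| + 1) * 1 := by
        refine mul_le_mul (Real.exp_le_exp.mpr (add_le_add (le_of_eq (by ring)) h2))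
          (Jint_le_one ht0) (Jint_nonneg _) (Real.exp_pos _).le
    _ = Real.exp 1 * Real.exp (-|(k:ℝ)|) := by rw [Real.exp_add]; ring
    _ ≤ _ := by
        gcongr
        linarith [Real.exp_one_lt_d9]

/-- one-dimensional Gaussian heat kernel -/
def gk (t u : ℝ) : ℝ := (Real.sqrt (2 * Real.pi * t))⁻¹ * Real.exp (-u ^ 2 / (2 * t))

lemma gk_nonneg (t u : ℝ) : 0 ≤ gk t u := by unfold gk; positivity

lemma gk_pos {t : ℝ} (ht : 0 < t) (u : ℝ) : 0 < gk t u := by unfold gk; positivity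

def indq (t θ : ℝ) : ℝ :=
  (Ioc (-Real.pi) Real.pi).indicator (fun θ => Real.exp (-(t * (1 - Real.cos θ)))) θ

lemma measurable_indq (t : ℝ) : Measurable (indq t) := by
  unfold indq
  exact (by fun_prop : Measurable _).indicator measurableSet_Ioc

lemma indq_nonneg (t θ : ℝ) : 0 ≤ indq t θ := by
  unfold indq; exact indicator_nonneg (fun _ _ => (Real.exp_pos _).le) _

lemma indq_le {t : ℝ} (ht : 0 ≤ t) (θ : ℝ) :
    indq t θ ≤ Real.exp (-(2 / Real.pi ^ 2 * t) * θ ^ 2) := by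
  unfold indq
  by_cases h : θ ∈ Ioc (-Real.pi) Real.pi
  · rw [indicator_of_mem h]
    apply Real.exp_le_exp.mpr
    have := Real.cos_le_one_sub_mul_cos_sq (abs_le.2 (Ioc_subset_Icc_self h))
    nlinarith
  · rw [indicator_of_notMem h]; positivity

lemma integrable_indq {t : ℝ} (ht : 0 < t) : Integrable (indq t) := by
  refine (integrable_exp_neg_mul_sq (show 0 < 2 / Real.pi ^ 2 * t by positivity)).mono'
    (measurable_indq t).aestronglyMeasurable (Filter.Eventually.of_forall fun θ => ?_)
  rw [Real.norm_of_nonneg (indq_nonneg _ _)]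
  exact indq_le ht.le θ

lemma norm_cexp_I (k : ℤ) (θ : ℝ) : ‖Complex.exp (Complex.I * k * (θ:ℂ))‖ = 1 := by
  rw [show Complex.I * k * (θ : ℂ) = ((k * θ : ℝ):ℂ) * Complex.I by push_cast; ring]
  exact Complex.norm_exp_ofReal_mul_I _

lemma qk_eq_int (t : ℝ) (k : ℤ) : qk t k =
    (2 * Real.pi)⁻¹ • ∫ θ : ℝ, (indq t θ : ℂ) * Complex.exp (Complex.I * k * (θ:ℂ)) := by
  rw [qk, integral_mOne, intervalIntegral.integral_of_le (by linarith [Real.pi_pos]),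
    ← integral_indicator measurableSet_Ioc]
  congr 2; ext θ
  unfold indq
  by_cases h : θ ∈ Ioc (-Real.pi) Real.pi
  · rw [indicator_of_mem h, indicator_of_mem h]
  · rw [indicator_of_notMem h, indicator_of_notMem h]; simp

lemma gk_eq_int {t : ℝ} (ht : 0 < t) (k : ℤ) : (gk t k : ℂ) =
    (2 * Real.pi)⁻¹ • ∫ θ : ℝ, (Real.exp (-(t / 2) * θ ^ 2) : ℂ) *
      Complex.exp (Complex.I * k * (θ:ℂ)) := by
  have h := fourierIntegral_gaussian (b := ((t / 2 : ℝ) : ℂ)) (by simpa using ht) (k : ℂ)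
  have h2 : ∀ θ : ℝ, (Real.exp (-(t / 2) * θ ^ 2) : ℂ) *
      Complex.exp (Complex.I * k * (θ:ℂ)) = Complex.exp (Complex.I * k * θ) *
        Complex.exp (-((t / 2 : ℝ) : ℂ) * (θ:ℂ) ^ 2) := by
    intro θ; push_cast; ring
  simp_rw [h2]
  rw [h, ← Complex.ofReal_div, show (1 / 2 : ℂ) = ((1 / 2 : ℝ) : ℂ) by push_cast; ring,
    ← Complex.ofReal_cpow (by positivity), ← Real.sqrt_eq_rpow, gk]
  rw [show (-(k:ℂ) ^ 2 / (4 * ((t / 2 : ℝ) : ℂ))) = ((-(k:ℝ) ^ 2 / (2 * t) : ℝ) : ℂ) by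
    push_cast; field_simp; norm_num, ← Complex.ofReal_exp, ← Complex.ofReal_mul,
    Complex.real_smul, ← Complex.ofReal_mul]
  congr 1
  rw [← mul_assoc]
  congr 1
  have h3 : Real.sqrt (Real.pi / (t / 2)) = 2 * Real.pi / Real.sqrt (2 * Real.pi * t) := by
    rw [eq_div_iff (by positivity), ← Real.sqrt_mul (by positivity),
      show Real.pi / (t / 2) * (2 * Real.pi * t) = (2 * Real.pi) ^ 2 by field_simp,
      Real.sqrt_sq (by positivity)]
  rw [h3]
  field_simp

def Derr (t : ℝ) : ℝ :=
  ∫ u : ℝ, |indq t (u / Real.sqrt t) - Real.exp (-u ^ 2 / 2)|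

lemma qk_sub_gk_le {t : ℝ} (ht : 0 < t) (k : ℤ) :
    ‖qk t k - gk t k‖ ≤ Derr t / Real.sqrt t := by
  have hs : 0 < Real.sqrt t := Real.sqrt_pos.2 ht
  have hg : Integrable (fun θ : ℝ => Real.exp (-(t / 2) * θ ^ 2)) :=
    integrable_exp_neg_mul_sq (by positivity)
  have hi : ∀ f : ℝ → ℝ, Integrable f →
      Integrable (fun θ : ℝ => (f θ : ℂ) * Complex.exp (Complex.I * k * (θ:ℂ))) := by
    intro f hf
    refine Integrable.mono' hf.norm ?_ ?_
    · refine AEStronglyMeasurable.mul ?_ (by fun_prop : Continuous _).aestronglyMeasurable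
      exact Complex.continuous_ofReal.comp_aestronglyMeasurable hf.1
    · refine Filter.Eventually.of_forall fun θ => ?_
      rw [norm_mul, norm_cexp_I, mul_one, Complex.norm_real]
  rw [qk_eq_int, gk_eq_int ht, ← smul_sub, ← integral_sub (hi _ (integrable_indq ht)) (hi _ hg),
    norm_smul]
  have e1 : Derr t / Real.sqrt t = ∫ θ : ℝ, |indq t θ - Real.exp (-(t / 2) * θ ^ 2)| := by
    have := Measure.integral_comp_div
      (fun θ : ℝ => |indq t θ - Real.exp (-(t / 2) * θ ^ 2)|) (Real.sqrt t)
    rw [Derr, div_eq_iff hs.ne', mul_comm, ← smul_eq_mul]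
    rw [abs_of_pos hs] at this
    rw [← this]
    congr 1; ext u
    congr 4
    rw [div_pow, Real.sq_sqrt ht.le]; field_simp
  rw [e1]
  have e2 : ‖∫ θ : ℝ, ((indq t θ : ℂ) * Complex.exp (Complex.I * k * (θ:ℂ)) -
      (Real.exp (-(t / 2) * θ ^ 2) : ℂ) * Complex.exp (Complex.I * k * (θ:ℂ)))‖ ≤
      ∫ θ : ℝ, |indq t θ - Real.exp (-(t / 2) * θ ^ 2)| := by
    apply norm_integral_le_of_norm_le ((integrable_indq ht).sub hg).abs
    refine Filter.Eventually.of_forall fun θ => ?_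
    rw [← sub_mul, norm_mul, norm_cexp_I, mul_one, ← Complex.ofReal_sub, Complex.norm_real]
    rfl
  have e3 : ‖(2 * Real.pi)⁻¹‖ ≤ 1 := by
    rw [Real.norm_of_nonneg (by positivity)]
    apply inv_le_one_of_one_le₀
    linarith [Real.pi_gt_three]
  calc _ ≤ 1 * _ := mul_le_mul e3 e2 (norm_nonneg _) zero_le_one
    _ = _ := one_mul _

lemma tendsto_one_sub_cos (u : ℝ) :
    Filter.Tendsto (fun t : ℝ => t * (1 - Real.cos (u / Real.sqrt t))) Filter.atTop
      (nhds (u ^ 2 / 2)) := by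
  rw [tendsto_iff_norm_sub_tendsto_zero]
  have hz : Filter.Tendsto (fun t : ℝ => u ^ 4 * t⁻¹) Filter.atTop (nhds 0) := by
    simpa using tendsto_inv_atTop_zero.const_mul (u ^ 4)
  refine squeeze_zero' (Filter.Eventually.of_forall fun _ => norm_nonneg _) ?_ hz
  filter_upwards [Filter.eventually_ge_atTop (u ^ 2), Filter.eventually_gt_atTop 0] with t h1 h0
  have hs : 0 < Real.sqrt t := Real.sqrt_pos.2 h0
  have hle : |u / Real.sqrt t| ≤ 1 := by
    rw [abs_div, abs_of_pos hs, div_le_one hs]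
    exact Real.abs_le_sqrt h1
  have hb := Real.cos_bound hle
  have e4 : |u / Real.sqrt t| ^ 4 = u ^ 4 / t ^ 2 := by
    rw [show (4:ℕ) = 2 * 2 by norm_num, pow_mul, sq_abs, div_pow, Real.sq_sqrt h0.le, div_pow]; ring
  have e2 : (u / Real.sqrt t) ^ 2 = u ^ 2 / t := by rw [div_pow, Real.sq_sqrt h0.le]
  rw [e4, e2] at hb
  rw [Real.norm_eq_abs]
  have e5 : t * (1 - Real.cos (u / Real.sqrt t)) - u ^ 2 / 2 =
      -(t * (Real.cos (u / Real.sqrt t) - (1 - u ^ 2 / t / 2))) := by field_simp; ring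
  rw [e5, abs_neg, abs_mul, abs_of_pos h0]
  calc _ ≤ t * (u ^ 4 / t ^ 2 * (5 / 96)) := by gcongr
    _ = u ^ 4 * t⁻¹ * (5 / 96) := by field_simp
    _ ≤ u ^ 4 * t⁻¹ := by
        have : 0 ≤ u ^ 4 * t⁻¹ := by positivity
        linarith

lemma tendsto_Derr : Filter.Tendsto Derr Filter.atTop (nhds 0) := by
  have hb1 : Integrable (fun u : ℝ => Real.exp (-(2 / Real.pi ^ 2) * u ^ 2)) :=
    integrable_exp_neg_mul_sq (by positivity)
  have hb2 : Integrable (fun u : ℝ => Real.exp (-(1/2) * u ^ 2)) :=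
    integrable_exp_neg_mul_sq (by positivity)
  have := tendsto_integral_filter_of_dominated_convergence (μ := volume) (l := Filter.atTop)
    (F := fun (t u : ℝ) => |indq t (u / Real.sqrt t) - Real.exp (-u ^ 2 / 2)|)
    (f := fun _ => (0:ℝ))
    (fun u : ℝ => Real.exp (-(2 / Real.pi ^ 2) * u ^ 2) + Real.exp (-(1/2) * u ^ 2))
    ?_ ?_ (hb1.add hb2) ?_
  · rw [integral_zero] at this
    exact this
  · refine Filter.Eventually.of_forall fun t => ?_
    have h1 : Measurable (fun u : ℝ => indq t (u / Real.sqrt t)) :=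
      (measurable_indq t).comp (by fun_prop)
    exact (Measurable.abs (h1.sub (by fun_prop))).aestronglyMeasurable
  · filter_upwards [Filter.eventually_gt_atTop 0] with t ht
    refine Filter.Eventually.of_forall fun u => ?_
    have h1 := indq_le ht.le (u / Real.sqrt t)
    rw [div_pow, Real.sq_sqrt ht.le] at h1
    have h2 := indq_nonneg t (u / Real.sqrt t)
    rw [Real.norm_eq_abs, abs_abs]
    have e : -(2 / Real.pi ^ 2 * t) * (u ^ 2 / t) = -(2 / Real.pi ^ 2) * u ^ 2 := by field_simp
    rw [e] at h1
    have e' : -u ^ 2 / 2 = -(1/2) * u ^ 2 := by ring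
    rw [e']
    have := Real.exp_pos (-(1/2) * u ^ 2)
    rw [abs_le]
    constructor <;> linarith [Real.exp_pos (-(2 / Real.pi ^ 2) * u ^ 2)]
  · refine Filter.Eventually.of_forall fun u => ?_
    have h1 : Filter.Tendsto (fun t : ℝ => indq t (u / Real.sqrt t)) Filter.atTop
        (nhds (Real.exp (-u ^ 2 / 2))) := by
      have h2 : Filter.Tendsto (fun t : ℝ => Real.exp (-(t * (1 - Real.cos (u / Real.sqrt t)))))
          Filter.atTop (nhds (Real.exp (-u ^ 2 / 2))) := by
        have := (Real.continuous_exp.tendsto _).comp (tendsto_one_sub_cos u).neg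
        rw [neg_div]
        exact this
      refine h2.congr' ?_
      filter_upwards [Filter.eventually_ge_atTop (u ^ 2), Filter.eventually_gt_atTop 0] with t h1 h0
      have hs : 0 < Real.sqrt t := Real.sqrt_pos.2 h0
      have hle : |u / Real.sqrt t| ≤ 1 := by
        rw [abs_div, abs_of_pos hs, div_le_one hs]
        exact Real.abs_le_sqrt h1
      rw [indq, indicator_of_mem]
      rw [abs_le] at hle
      constructor <;> linarith [Real.pi_gt_three]
    have h3 := (h1.sub_const (Real.exp (-u ^ 2 / 2))).abs
    simpa using h3

/-- `d`-dimensional Gaussian heat kernel -/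
def Gd {d : ℕ} (t : ℝ) (a : Fin d → ℝ) : ℝ := ∏ i, gk t (a i)

lemma Gd_nonneg {d : ℕ} (t : ℝ) (a : Fin d → ℝ) : 0 ≤ Gd t a :=
  Finset.prod_nonneg fun _ _ => gk_nonneg _ _

lemma prod_le_of_one {d : ℕ} (f : Fin d → ℝ) (i : Fin d) {A e : ℝ} (hA : 0 ≤ A)
    (h0 : ∀ j, 0 ≤ f j) (h : ∀ j, f j ≤ A) (hi : f i ≤ A * e) : ∏ j, f j ≤ A ^ d * e := by
  rw [← Finset.mul_prod_erase _ _ (Finset.mem_univ i)]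
  have h1 : ∏ j ∈ Finset.univ.erase i, f j ≤ A ^ (d - 1) := by
    calc _ ≤ ∏ j ∈ Finset.univ.erase i, A := Finset.prod_le_prod (fun j _ => h0 j) (fun j _ => h j)
      _ = A ^ (d - 1) := by simp
  have hd : 0 < d := i.pos
  calc _ ≤ (A * e) * A ^ (d - 1) := by
        apply mul_le_mul hi h1 (Finset.prod_nonneg fun j _ => h0 j) ((h0 i).trans hi)
    _ = A ^ d * e := by
        obtain ⟨n, rfl⟩ : ∃ n, d = n + 1 := ⟨d - 1, by omega⟩
        simp [pow_succ]; ring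

lemma exp_neg_le_fact (d : ℕ) {v : ℝ} (hv : 0 < v) : Real.exp (-v) ≤ d.factorial / v ^ d := by
  rw [Real.exp_neg, inv_le_comm₀ (Real.exp_pos _) (by positivity), inv_div]
  exact Real.pow_div_factorial_le_exp v hv.le d

lemma prod_qk_le {d : ℕ} {t : ℝ} (ht : 0 < t) (x : Fin d → ℤ) (i : Fin d) (hi : x i ≠ 0) :
    ‖∏ j, qk t (x j)‖ ≤ 6 ^ d * d.factorial / |(x i : ℝ)| ^ d := by
  have hk : 0 < |(x i : ℝ)| := abs_pos.2 (by exact_mod_cast hi)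
  have hd : 0 < d := i.pos
  rw [norm_prod]
  rcases le_total 1 t with h | h
  · have hs : 0 < Real.sqrt t := Real.sqrt_pos.2 ht
    have h1 := prod_le_of_one (fun j => ‖qk t (x j)‖) i (A := 6 / Real.sqrt t)
      (e := Real.exp (-(|(x i:ℝ)| / Real.sqrt t))) (by positivity) (fun j => norm_nonneg _)
      (fun j => ?_) (norm_qk_le_big h (x i))
    · refine h1.trans ?_
      calc _ ≤ (6 / Real.sqrt t) ^ d * (d.factorial / (|(x i:ℝ)| / Real.sqrt t) ^ d) := by
            gcongr; exact exp_neg_le_fact d (by positivity)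
        _ = _ := by rw [div_pow, div_pow]; field_simp
    · refine (norm_qk_le_big h (x j)).trans ?_
      apply mul_le_of_le_one_right (by positivity)
      rw [Real.exp_le_one_iff, neg_nonpos]; positivity
  · have h1 := prod_le_of_one (fun j => ‖qk t (x j)‖) i (A := 1)
      (e := 3 * Real.exp (-(|(x i:ℝ)|))) (by positivity) (fun j => norm_nonneg _)
      (fun j => (norm_qk_le_J ht.le _).trans (Jint_le_one ht.le))
      (by rw [one_mul]; exact norm_qk_le_small ht.le h (x i))
    refine h1.trans ?_
    have h2 := exp_neg_le_fact d hk
    have h3 : (3:ℝ) ≤ 6 ^ d := by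
      calc (3:ℝ) ≤ 6 ^ 1 := by norm_num
        _ ≤ 6 ^ d := pow_le_pow_right₀ (by norm_num) hd
    rw [one_pow, one_mul, mul_div_assoc]
    exact mul_le_mul h3 h2 (Real.exp_pos _).le (by positivity)

lemma gk_le {t : ℝ} (ht : 0 < t) (u : ℝ) :
    gk t u ≤ 1 / Real.sqrt t * Real.exp (-(|u| / Real.sqrt t)) := by
  have hs : 0 < Real.sqrt t := Real.sqrt_pos.2 ht
  rw [gk, Real.sqrt_mul (by positivity), mul_inv]
  have h1 : Real.exp (-u ^ 2 / (2 * t)) ≤ 2 * Real.exp (-(|u| / Real.sqrt t)) := by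
    have h2 : -u ^ 2 / (2 * t) ≤ 1 / 2 + (-(|u| / Real.sqrt t)) := by
      have e : -u ^ 2 / (2 * t) = - (|u| / Real.sqrt t) ^ 2 / 2 := by
        rw [div_pow, Real.sq_sqrt ht.le, sq_abs]; field_simp
      rw [e]
      nlinarith [sq_nonneg (|u| / Real.sqrt t - 1)]
    calc _ ≤ Real.exp (1 / 2 + (-(|u| / Real.sqrt t))) := Real.exp_le_exp.mpr h2
      _ = Real.exp (1 / 2) * Real.exp (-(|u| / Real.sqrt t)) := Real.exp_add _ _
      _ ≤ _ := by
        gcongr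
        have := Real.exp_bound_div_one_sub_of_interval (x := 1/2) (by norm_num) (by norm_num)
        linarith
  have h3 : (Real.sqrt (2 * Real.pi))⁻¹ * 2 ≤ 1 := by
    rw [inv_mul_le_iff₀ (by positivity), mul_one]
    apply Real.le_sqrt_of_sq_le
    linarith [Real.pi_gt_three]
  calc _ ≤ (Real.sqrt (2 * Real.pi))⁻¹ * (Real.sqrt t)⁻¹ * (2 * Real.exp (-(|u| / Real.sqrt t))) := by
        gcongr
    _ = ((Real.sqrt (2 * Real.pi))⁻¹ * 2) * ((1 / Real.sqrt t) * Real.exp (-(|u| / Real.sqrt t))) := by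
        ring
    _ ≤ _ := mul_le_of_le_one_left (by positivity) h3

lemma gk_le' {t : ℝ} (ht : 0 < t) (u : ℝ) : gk t u ≤ 1 / Real.sqrt t := by
  refine (gk_le ht u).trans ?_
  apply mul_le_of_le_one_right (by positivity)
  rw [Real.exp_le_one_iff, neg_nonpos]; positivity

lemma Gd_le_sqrt {d : ℕ} {t : ℝ} (ht : 0 < t) (a : Fin d → ℝ) : Gd t a ≤ (1 / Real.sqrt t) ^ d := by
  calc Gd t a ≤ ∏ i : Fin d, (1 / Real.sqrt t) :=
        Finset.prod_le_prod (fun i _ => gk_nonneg _ _) (fun i _ => gk_le' ht _)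
    _ = _ := by simp

lemma Gd_le {d : ℕ} {t : ℝ} (ht : 0 < t) (a : Fin d → ℝ) (i : Fin d) (hi : a i ≠ 0) :
    Gd t a ≤ d.factorial / |a i| ^ d := by
  have hk : 0 < |a i| := abs_pos.2 hi
  have hs : 0 < Real.sqrt t := Real.sqrt_pos.2 ht
  have h1 := prod_le_of_one (fun j => gk t (a j)) i (A := 1 / Real.sqrt t)
      (e := Real.exp (-(|a i| / Real.sqrt t))) (by positivity) (fun j => gk_nonneg _ _)
      (fun j => gk_le' ht _) (gk_le ht (a i))
  refine h1.trans ?_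
  calc _ ≤ (1 / Real.sqrt t) ^ d * (d.factorial / (|a i| / Real.sqrt t) ^ d) := by
            gcongr; exact exp_neg_le_fact d (by positivity)
    _ = _ := by rw [div_pow, div_pow]; field_simp; simp

lemma prod_sub_prod_le {ι : Type*} (s : Finset ι) (a b : ι → ℂ) {M e : ℝ} (hM : 0 ≤ M) (he : 0 ≤ e)
    (ha : ∀ j, ‖a j‖ ≤ M) (hb : ∀ j, ‖b j‖ ≤ M) (hab : ∀ j, ‖a j - b j‖ ≤ M * e) :
    ‖∏ j ∈ s, a j - ∏ j ∈ s, b j‖ ≤ s.card * M ^ s.card * e := by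
  classical
  induction s using Finset.induction_on with
  | empty => simp
  | insert j s hj ih =>
    rw [Finset.prod_insert hj, Finset.prod_insert hj, Finset.card_insert_of_notMem hj]
    have hA : ‖∏ j ∈ s, a j‖ ≤ M ^ s.card := by
      rw [norm_prod]
      calc _ ≤ ∏ j ∈ s, M := Finset.prod_le_prod (fun _ _ => norm_nonneg _) (fun j _ => ha j)
        _ = _ := by simp
    have e1 : a j * ∏ j ∈ s, a j - b j * ∏ j ∈ s, b j =
      (a j - b j) * ∏ j ∈ s, a j + b j * (∏ j ∈ s, a j - ∏ j ∈ s, b j) := by ring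
    rw [e1]
    calc _ ≤ ‖(a j - b j) * ∏ j ∈ s, a j‖ + ‖b j * (∏ j ∈ s, a j - ∏ j ∈ s, b j)‖ := norm_add_le _ _
      _ ≤ (M * e) * M ^ s.card + M * (s.card * M ^ s.card * e) := by
          rw [norm_mul, norm_mul]
          apply add_le_add
          · exact mul_le_mul (hab j) hA (norm_nonneg _) (by positivity)
          · exact mul_le_mul (hb j) ih (norm_nonneg _) hM
      _ = _ := by push_cast; ring

lemma prod_qk_sub_le {d : ℕ} {t : ℝ} (ht : 0 < t) (x : Fin d → ℤ) :
    |‖∏ j, qk t (x j)‖ - Gd t (fun i => (x i : ℝ))| ≤ d * 2 ^ d * Derr t * (1 / Real.sqrt t) ^ d := by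
  have hs : 0 < Real.sqrt t := Real.sqrt_pos.2 ht
  have hD : 0 ≤ Derr t := integral_nonneg fun _ => abs_nonneg _
  have h1 := prod_sub_prod_le Finset.univ (fun j => qk t (x j)) (fun j => (gk t (x j) : ℂ))
    (M := 2 / Real.sqrt t) (e := Derr t) (by positivity) hD
    (fun j => (norm_qk_le_J ht.le _).trans (Jint_le ht)) (fun j => ?_) (fun j => ?_)
  · have e : Gd t (fun i => (x i : ℝ)) = ‖∏ j, (gk t (x j) : ℂ)‖ := by
      rw [norm_prod, Gd]
      refine Finset.prod_congr rfl fun i _ => ?_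
      rw [Complex.norm_real, Real.norm_of_nonneg (gk_nonneg _ _)]
    rw [e]
    refine (abs_norm_sub_norm_le _ _).trans (h1.trans (le_of_eq ?_))
    simp; ring
  · rw [Complex.norm_real, Real.norm_of_nonneg (gk_nonneg _ _)]
    refine (gk_le' ht _).trans ?_
    gcongr; norm_num
  · refine (qk_sub_gk_le ht _).trans ?_
    rw [div_mul_eq_mul_div]
    gcongr
    linarith

lemma sqrt_pow_eq (d : ℕ) {t : ℝ} (ht : 0 < t) : (1 / Real.sqrt t) ^ d = t ^ (-(d:ℝ) / 2) := by
  rw [one_div, inv_pow, Real.sqrt_eq_rpow, ← Real.rpow_natCast, ← Real.rpow_mul ht.le,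
    ← Real.rpow_neg ht.le]
  congr 1; ring

lemma measurable_qk (k : ℤ) : Measurable (fun t => qk t k) := by
  unfold qk
  apply StronglyMeasurable.measurable
  apply StronglyMeasurable.integral_prod_right
    (f := fun (t θ : ℝ) => ((Real.exp (-(t * (1 - Real.cos θ))) : ℝ) : ℂ) *
      Complex.exp (Complex.I * k * (θ:ℂ)))
  apply Continuous.stronglyMeasurable
  unfold Function.uncurry
  fun_prop

lemma measurable_gk (u : ℝ) : Measurable (fun t => gk t u) := by
  unfold gk; fun_prop

lemma measurable_Gd {d : ℕ} (a : Fin d → ℝ) : Measurable (fun t => Gd t a) := by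
  unfold Gd
  exact Finset.measurable_prod _ fun i _ => measurable_gk _

lemma measurable_Fd {d : ℕ} (x : Fin d → ℤ) : Measurable (fun t => ‖∏ j, qk t (x j)‖) :=
  (Finset.measurable_prod _ fun i _ => measurable_qk _).norm

lemma integrable_tail {d : ℕ} (hd : 3 ≤ d) {A : ℝ} (hA : 0 < A) :
    IntegrableOn (fun t : ℝ => (1 / Real.sqrt t) ^ d) (Ioi A) ∧
    ∫ t in Ioi A, (1 / Real.sqrt t) ^ d = A ^ (1 - (d:ℝ) / 2) / ((d:ℝ) / 2 - 1) := by
  have hdr : (3:ℝ) ≤ d := by exact_mod_cast hd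
  have h1 : -(d:ℝ) / 2 < -1 := by linarith
  have he : EqOn (fun t : ℝ => (1 / Real.sqrt t) ^ d) (fun t => t ^ (-(d:ℝ) / 2)) (Ioi A) :=
    fun t ht => sqrt_pow_eq d (hA.trans ht)
  constructor
  · exact (integrableOn_Ioi_rpow_of_lt h1 hA).congr_fun he.symm measurableSet_Ioi
  · rw [setIntegral_congr_fun measurableSet_Ioi he, integral_Ioi_rpow_of_lt h1 hA,
      neg_div, ← div_neg]
    congr 2 <;> ring

lemma integrable_Fd {d : ℕ} (hd : 3 ≤ d) (x : Fin d → ℤ) :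
    IntegrableOn (fun t => ‖∏ j, qk t (x j)‖) (Ioi 0) := by
  rw [← Ioc_union_Ioi_eq_Ioi (zero_le_one' ℝ)]
  apply IntegrableOn.union
  · apply Measure.integrableOn_of_bounded (M := 1) (by simp) (measurable_Fd x).aestronglyMeasurable
    filter_upwards [self_mem_ae_restrict measurableSet_Ioc] with t ht
    rw [norm_norm, norm_prod]
    exact Finset.prod_le_one (fun _ _ => norm_nonneg _)
      (fun j _ => (norm_qk_le_J ht.1.le _).trans (Jint_le_one ht.1.le))
  · refine Integrable.mono' ((integrable_tail hd one_pos).1.const_mul (2 ^ d))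
      (measurable_Fd x).aestronglyMeasurable ?_
    filter_upwards [self_mem_ae_restrict measurableSet_Ioi] with t ht
    have ht0 : 0 < t := one_pos.trans ht
    rw [norm_norm, norm_prod, ← mul_pow, mul_one_div]
    calc _ ≤ ∏ j : Fin d, (2 / Real.sqrt t) := Finset.prod_le_prod (fun _ _ => norm_nonneg _)
          (fun j _ => (norm_qk_le_J ht0.le _).trans (Jint_le ht0))
      _ = _ := by simp [div_pow]

lemma summable_srwP {d : ℕ} (hd : 3 ≤ d) (x : Fin d → ℤ) : Summable (fun n => srwP d n x) ∧
    greenZ d x = d * ∫ t in Ioi (0:ℝ), ‖∏ j, qk t (x j)‖ := by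
  have hd0 : 0 < d := by omega
  have h := lintegral_heat hd0 x
  rw [← ofReal_integral_eq_lintegral_ofReal (integrable_Fd hd x)
    (Filter.Eventually.of_forall fun t => norm_nonneg _)] at h
  have hd1 : (d:ℝ≥0∞) ≠ 0 := by exact_mod_cast hd0.ne'
  have h2 : ∑' n, ENNReal.ofReal (srwP d n x) =
      d * ENNReal.ofReal (∫ t in Ioi (0:ℝ), ‖∏ j, qk t (x j)‖) := by
    rw [h, ← mul_assoc, ENNReal.mul_inv_cancel hd1 (by simp), one_mul]
  have hs : Summable (fun n => srwP d n x) := by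
    have h3 : ∑' n, ENNReal.ofReal (srwP d n x) ≠ ⊤ := by
      rw [h2]; exact ENNReal.mul_ne_top (by simp) (by simp)
    have := ENNReal.summable_toReal h3
    simpa [ENNReal.toReal_ofReal (srwP_nonneg _ _ _)] using this
  refine ⟨hs, ?_⟩
  rw [← ENNReal.ofReal_tsum_of_nonneg (fun n => srwP_nonneg _ _ _) hs] at h2
  have h4 := congrArg ENNReal.toReal h2
  rw [ENNReal.toReal_ofReal (tsum_nonneg fun n => srwP_nonneg _ _ _), ENNReal.toReal_mul,
    ENNReal.toReal_ofReal (integral_nonneg fun _ => norm_nonneg _)] at h4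
  simpa [greenZ] using h4

lemma integrable_Gd {d : ℕ} (hd : 3 ≤ d) (a : Fin d → ℝ) (i : Fin d) (hi : a i ≠ 0) :
    IntegrableOn (fun t => Gd t a) (Ioi 0) := by
  rw [← Ioc_union_Ioi_eq_Ioi (zero_le_one' ℝ)]
  apply IntegrableOn.union
  · apply Measure.integrableOn_of_bounded (M := d.factorial / |a i| ^ d) (by simp)
      (measurable_Gd a).aestronglyMeasurable
    filter_upwards [self_mem_ae_restrict measurableSet_Ioc] with t ht
    rw [Real.norm_of_nonneg (Gd_nonneg _ _)]
    exact Gd_le ht.1 a i hi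
  · refine Integrable.mono' (integrable_tail hd one_pos).1
      (measurable_Gd a).aestronglyMeasurable ?_
    filter_upwards [self_mem_ae_restrict measurableSet_Ioi] with t ht
    rw [Real.norm_of_nonneg (Gd_nonneg _ _)]
    exact Gd_le_sqrt (one_pos.trans ht) a

lemma green_asymp_aux {d : ℕ} (hd : 3 ≤ d) {ε : ℝ} (hε : 0 < ε) :
    ∃ R : ℝ, 0 < R ∧ ∀ (x : Fin d → ℤ) (i : Fin d), R ≤ |(x i : ℝ)| →
      |greenZ d x - d * ∫ t in Ioi (0:ℝ), Gd t (fun i => (x i : ℝ))| ≤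
        ε * |(x i : ℝ)| ^ (2 - (d:ℝ)) := by
  have hdr : (3:ℝ) ≤ d := by exact_mod_cast hd
  set C : ℝ := 6 ^ d * d.factorial + d.factorial with hC
  have hCpos : 0 < C := by positivity
  set a : ℝ := ε / (2 * d * C) with ha
  have hapos : 0 < a := by positivity
  set B : ℝ := a ^ (1 - (d:ℝ) / 2) / ((d:ℝ) / 2 - 1) with hB
  have hd2 : 0 < (d:ℝ) / 2 - 1 := by linarith
  have hBpos : 0 < B := by positivity
  set η : ℝ := ε / (2 * d * B) with hη
  have hηpos : 0 < η := by positivity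
  have hev : ∀ᶠ t : ℝ in Filter.atTop, d * 2 ^ d * Derr t < η := by
    have := tendsto_Derr.const_mul ((d:ℝ) * 2 ^ d)
    rw [mul_zero] at this
    exact this.eventually_lt_const hηpos
  obtain ⟨T, hT⟩ := Filter.eventually_atTop.1 hev
  refine ⟨max 1 (Real.sqrt (max T 0 / a)), by positivity, fun x i hx => ?_⟩
  set ρ := |(x i : ℝ)| with hρ
  have hρ1 : 1 ≤ ρ := (le_max_left _ _).trans hx
  have hρ0 : 0 < ρ := by linarith
  have hxi : x i ≠ 0 := by
    intro h; rw [h] at hρ; simp at hρ; linarith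
  have hxi' : (x i : ℝ) ≠ 0 := by exact_mod_cast hxi
  have hAT : T ≤ a * ρ ^ 2 := by
    have h1 : Real.sqrt (max T 0 / a) ≤ ρ := (le_max_right _ _).trans hx
    rw [Real.sqrt_le_left hρ0.le, div_le_iff₀ hapos] at h1
    linarith [le_max_left T 0]
  set A := a * ρ ^ 2 with hA
  have hApos : 0 < A := by positivity
  have hF := integrable_Fd hd x
  have hG := integrable_Gd hd (fun i => (x i : ℝ)) i hxi'
  rw [(summable_srwP hd x).2, ← mul_sub, ← integral_sub hF hG, abs_mul, Nat.abs_cast]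
  have hFG : Integrable (fun t => ‖‖∏ j, qk t (x j)‖ - Gd t (fun i => (x i : ℝ))‖) (volume.restrict (Ioi 0)) :=
    (hF.sub hG).norm
  have h1 : |∫ t in Ioi (0:ℝ), (‖∏ j, qk t (x j)‖ - Gd t (fun i => (x i : ℝ)))| ≤
      (∫ t in Ioc 0 A, ‖‖∏ j, qk t (x j)‖ - Gd t (fun i => (x i : ℝ))‖) +
      ∫ t in Ioi A, ‖‖∏ j, qk t (x j)‖ - Gd t (fun i => (x i : ℝ))‖ := by
    have hu := setIntegral_union (μ := volume)
      (f := fun t => ‖‖∏ j, qk t (x j)‖ - Gd t (fun i => (x i : ℝ))‖)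
      (Ioc_disjoint_Ioi (le_refl A)) measurableSet_Ioi
      (hFG.mono_measure (Measure.restrict_mono (Ioc_subset_Ioi_self (b := 0) (a := A)) le_rfl))
      (hFG.mono_measure (Measure.restrict_mono (Ioi_subset_Ioi hApos.le) le_rfl))
    rw [Ioc_union_Ioi_eq_Ioi hApos.le] at hu
    rw [← hu]
    have hn := norm_integral_le_integral_norm (μ := volume.restrict (Ioi (0:ℝ))) (fun t => ‖∏ j, qk t (x j)‖ - Gd t (fun i => (x i : ℝ)))
    rwa [Real.norm_eq_abs] at hn
  have h2 : (∫ t in Ioc 0 A, ‖‖∏ j, qk t (x j)‖ - Gd t (fun i => (x i : ℝ))‖) ≤ C / ρ ^ d * A := by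
    calc _ ≤ ∫ t in Ioc 0 A, C / ρ ^ d := by
          apply setIntegral_mono_on
            (hFG.mono_measure (Measure.restrict_mono Ioc_subset_Ioi_self le_rfl))
            (by simp) measurableSet_Ioc
          intro t ht
          have g1 := prod_qk_le ht.1 x i hxi
          have g2 := Gd_le ht.1 (fun i => (x i : ℝ)) i hxi'
          calc _ ≤ ‖‖∏ j, qk t (x j)‖‖ + ‖Gd t (fun i => (x i : ℝ))‖ := norm_sub_le _ _
            _ ≤ _ := by
              rw [norm_norm, Real.norm_of_nonneg (Gd_nonneg _ _), hC, add_div]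
              exact add_le_add g1 g2
      _ = _ := by simp [hApos.le, mul_comm]
  have h3 : (∫ t in Ioi A, ‖‖∏ j, qk t (x j)‖ - Gd t (fun i => (x i : ℝ))‖) ≤
      η * (A ^ (1 - (d:ℝ) / 2) / ((d:ℝ) / 2 - 1)) := by
    rw [← (integrable_tail hd hApos).2, ← integral_const_mul]
    apply setIntegral_mono_on
      (hFG.mono_measure (Measure.restrict_mono (Ioi_subset_Ioi hApos.le) le_rfl))
      ((integrable_tail hd hApos).1.const_mul _) measurableSet_Ioi
    intro t ht
    have ht0 : 0 < t := hApos.trans ht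
    refine (prod_qk_sub_le ht0 x).trans ?_
    have := hT t (hAT.trans (le_of_lt ht))
    gcongr
  have e1 : C / ρ ^ d * A = C * a * ρ ^ (2 - (d:ℝ)) := by
    rw [Real.rpow_sub hρ0, Real.rpow_natCast, hA, Real.rpow_ofNat]; field_simp
  have e2 : A ^ (1 - (d:ℝ) / 2) / ((d:ℝ) / 2 - 1) = B * ρ ^ (2 - (d:ℝ)) := by
    rw [hA, Real.mul_rpow hapos.le (by positivity), hB, ← Real.rpow_natCast, ← Real.rpow_mul hρ0.le]
    push_cast
    rw [show (2:ℝ) * (1 - d / 2) = 2 - d by ring]; ring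
  rw [e1] at h2
  rw [e2] at h3
  calc _ ≤ (d:ℝ) * (C * a * ρ ^ (2 - (d:ℝ)) + η * (B * ρ ^ (2 - (d:ℝ)))) := by
        gcongr; linarith
    _ = ε * ρ ^ (2 - (d:ℝ)) := by
        rw [ha, hη]; field_simp; norm_num

/-- Euclidean norm on functions. -/
def nrm {d : ℕ} (a : Fin d → ℝ) : ℝ := Real.sqrt (∑ i, (a i) ^ 2)

/-- real valued Brownian Green function. -/
def gR {d : ℕ} (a : Fin d → ℝ) : ℝ := greenK d * nrm a ^ (2 - (d:ℝ))

lemma greenK_pos {d : ℕ} (hd : 3 ≤ d) : 0 < greenK d := by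
  have hdr : (3:ℝ) ≤ d := by exact_mod_cast hd
  have : 0 < Real.Gamma ((d:ℝ)/2 - 1) := Real.Gamma_pos_of_pos (by linarith)
  unfold greenK; positivity

lemma nrm_nonneg {d : ℕ} (a : Fin d → ℝ) : 0 ≤ nrm a := Real.sqrt_nonneg _

lemma nrm_pos {d : ℕ} {a : Fin d → ℝ} (ha : a ≠ 0) : 0 < nrm a := by
  obtain ⟨i, hi⟩ := Function.ne_iff.1 ha
  apply Real.sqrt_pos.2
  exact Finset.sum_pos' (fun _ _ => sq_nonneg _) ⟨i, Finset.mem_univ _, by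
    have : a i ≠ 0 := hi
    positivity⟩

lemma nrm_eq {d : ℕ} (a : Fin d → ℝ) : nrm a = ‖(WithLp.toLp 2 a : EuclideanSpace ℝ (Fin d))‖ := by
  rw [EuclideanSpace.norm_eq]; simp [nrm]

lemma nrm_add_le {d : ℕ} (a b : Fin d → ℝ) : nrm (a + b) ≤ nrm a + nrm b := by
  simp only [nrm_eq, WithLp.toLp_add]; exact norm_add_le _ _

lemma nrm_smul {d : ℕ} (c : ℝ) (a : Fin d → ℝ) : nrm (c • a) = |c| * nrm a := by
  simp only [nrm_eq, WithLp.toLp_smul]; exact norm_smul _ _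

lemma nrm_neg {d : ℕ} (a : Fin d → ℝ) : nrm (-a) = nrm a := by
  simp [nrm]

lemma abs_le_nrm {d : ℕ} (a : Fin d → ℝ) (i : Fin d) : |a i| ≤ nrm a := by
  rw [nrm, ← Real.sqrt_sq_eq_abs]
  apply Real.sqrt_le_sqrt
  exact Finset.single_le_sum (f := fun i => a i ^ 2) (fun _ _ => sq_nonneg _) (Finset.mem_univ i)

lemma nrm_le {d : ℕ} (a : Fin d → ℝ) {m : ℝ} (hm : 0 ≤ m) (h : ∀ i, |a i| ≤ m) :
    nrm a ≤ Real.sqrt d * m := by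
  rw [nrm, ← Real.sqrt_sq hm, ← Real.sqrt_mul (by positivity)]
  apply Real.sqrt_le_sqrt
  calc ∑ i, a i ^ 2 ≤ ∑ i : Fin d, m ^ 2 := Finset.sum_le_sum fun i _ => by
        rw [← sq_abs]; exact pow_le_pow_left₀ (abs_nonneg _) (h i) 2
    _ = _ := by simp

lemma gR_nonneg {d : ℕ} (hd : 3 ≤ d) (a : Fin d → ℝ) : 0 ≤ gR a :=
  mul_nonneg (greenK_pos hd).le (Real.rpow_nonneg (nrm_nonneg _) _)

lemma gR_pos {d : ℕ} (hd : 3 ≤ d) {a : Fin d → ℝ} (ha : a ≠ 0) : 0 < gR a :=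
  mul_pos (greenK_pos hd) (Real.rpow_pos_of_pos (nrm_pos ha) _)

lemma Gd_eq {d : ℕ} {t : ℝ} (ht : 0 < t) (a : Fin d → ℝ) :
    Gd t a = (2 * Real.pi * t) ^ (-(d:ℝ)/2) * Real.exp (-(nrm a ^ 2 / 2) * t⁻¹) := by
  unfold Gd gk
  rw [Finset.prod_mul_distrib, ← Real.exp_sum]
  congr 1
  · rw [← sqrt_pow_eq d (by positivity)]; simp
  · congr 1
    rw [nrm, Real.sq_sqrt (Finset.sum_nonneg fun _ _ => sq_nonneg _), ← Finset.sum_div,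
      Finset.sum_neg_distrib]
    field_simp

lemma integral_Gd {d : ℕ} (hd : 3 ≤ d) {a : Fin d → ℝ} (ha : a ≠ 0) :
    ∫ t in Ioi (0:ℝ), Gd t a = gR a := by
  have hdr : (3:ℝ) ≤ d := by exact_mod_cast hd
  have hn := nrm_pos ha
  have hpi := Real.pi_pos
  rw [← integral_comp_rpow_Ioi (fun t => Gd t a) (p := -1) (by norm_num)]
  have h1 : ∀ u ∈ Ioi (0:ℝ), (|(-1:ℝ)| * u ^ ((-1:ℝ) - 1)) • Gd (u ^ (-1:ℝ)) a =
      (2 * Real.pi) ^ (-(d:ℝ)/2) * (u ^ (((d:ℝ)/2 - 1) - 1) * Real.exp (-(nrm a ^ 2 / 2 * u))) := by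
    intro u hu
    have hu : 0 < u := hu
    rw [Gd_eq (by positivity), Real.rpow_neg_one, inv_inv, Real.mul_rpow (by positivity) (by positivity),
      Real.inv_rpow hu.le, ← Real.rpow_neg hu.le, abs_neg, abs_one, one_mul, smul_eq_mul]
    rw [show ((d:ℝ)/2 - 1) - 1 = ((-1:ℝ) - 1) + -(-(d:ℝ)/2) by ring, Real.rpow_add hu, neg_mul]
    ring
  rw [setIntegral_congr_fun measurableSet_Ioi h1, integral_const_mul,
    Real.integral_rpow_mul_exp_neg_mul_Ioi (by linarith) (by positivity)]
  unfold gR greenK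
  rw [one_div, inv_div, Real.div_rpow (by norm_num) (by positivity), Real.mul_rpow (by norm_num) (by positivity),
    ← Real.rpow_natCast, ← Real.rpow_mul hn.le]
  rw [show -(d:ℝ)/2 = -(d/2) by ring, Real.rpow_neg (by norm_num), Real.rpow_neg (by positivity),
    Real.rpow_sub (by norm_num : (0:ℝ) < 2), show (2 - (d:ℝ)) = -(((2:ℕ):ℝ) * (d/2 - 1)) by push_cast; ring,
    Real.rpow_neg hn.le, Real.rpow_one]
  field_simp

lemma greenE_ne {d : ℕ} {x y : Fin d → ℝ} (h : x ≠ y) : greenE d x y = ENNReal.ofReal (gR (x - y)) := by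
  simp [greenE, h, gR, nrm]

lemma lintegral_Gd {d : ℕ} (hd : 3 ≤ d) (x y : Fin d → ℝ) :
    ∫⁻ t in Ioi (0:ℝ), ENNReal.ofReal (Gd t (x - y)) = greenE d x y := by
  by_cases h : x = y
  · subst h
    simp only [greenE, if_true, sub_self]
    by_contra hne
    have hi : IntegrableOn (fun t => Gd t (0 : Fin d → ℝ)) (Ioi 0) := by
      refine ⟨(measurable_Gd _).aestronglyMeasurable, ?_⟩
      rw [hasFiniteIntegral_iff_ofReal (Filter.Eventually.of_forall fun t => Gd_nonneg _ _)]
      exact lt_top_iff_ne_top.2 hne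
    apply not_integrableOn_Ioi_rpow (-(d:ℝ)/2)
    have h2 := hi.const_mul ((2 * Real.pi) ^ ((d:ℝ)/2))
    refine Integrable.congr h2 ?_
    filter_upwards [self_mem_ae_restrict measurableSet_Ioi] with t ht
    have ht : 0 < t := ht
    have hpi := Real.pi_pos
    rw [Gd_eq ht, Real.mul_rpow (by positivity) ht.le]
    have h0 : nrm (0 : Fin d → ℝ) = 0 := by simp [nrm]
    rw [h0, neg_div, Real.rpow_neg (by positivity)]
    have : (0:ℝ) < (2 * Real.pi) ^ ((d:ℝ)/2) := by positivity
    simp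
    field_simp
  · have ha : x - y ≠ 0 := sub_ne_zero.2 h
    obtain ⟨i, hi⟩ := Function.ne_iff.1 ha
    rw [greenE_ne h, ← integral_Gd hd ha, ofReal_integral_eq_lintegral_ofReal (integrable_Gd hd _ i hi)]
    exact Filter.Eventually.of_forall fun t => Gd_nonneg _ _

/-- integer vector as a real vector -/
def toR {d : ℕ} (x : Fin d → ℤ) : Fin d → ℝ := fun i => (x i : ℝ)

lemma green_asymp {d : ℕ} (hd : 3 ≤ d) {ε : ℝ} (hε : 0 < ε) :
    ∃ R : ℝ, 0 < R ∧ ∀ (x : Fin d → ℤ), R ≤ nrm (toR x) →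
      |greenZ d x - d * gR (toR x)| ≤ ε * (d * gR (toR x)) := by
  have hdr : (3:ℝ) ≤ d := by exact_mod_cast hd
  have hk := greenK_pos hd
  set s : ℝ := Real.sqrt d with hs
  have hspos : 0 < s := Real.sqrt_pos.2 (by linarith)
  obtain ⟨R, hR, H⟩ := green_asymp_aux hd (ε := ε * d * greenK d * s ^ (2 - (d:ℝ))) (by positivity)
  refine ⟨s * R, by positivity, fun x hx => ?_⟩
  haveI : Nonempty (Fin d) := ⟨⟨0, by omega⟩⟩
  obtain ⟨i, hi⟩ := Finite.exists_max (fun i => |toR x i|)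
  have h1 := nrm_le (toR x) (abs_nonneg _) hi
  have h2 : R ≤ |(x i : ℝ)| := by
    have := hx.trans h1
    exact le_of_mul_le_mul_left this hspos
  have hx0 : toR x ≠ 0 := by
    intro h
    rw [h] at hx
    have : nrm (0 : Fin d → ℝ) = 0 := by simp [nrm]
    rw [this] at hx
    have := mul_pos hspos hR
    linarith
  have h3 := H x i h2
  have h4 : ∫ t in Ioi (0:ℝ), Gd t (fun i => (x i : ℝ)) = gR (toR x) := integral_Gd hd hx0
  rw [h4] at h3
  refine h3.trans ?_
  unfold gR
  have h5 : s ^ (2 - (d:ℝ)) * |(x i : ℝ)| ^ (2 - (d:ℝ)) ≤ nrm (toR x) ^ (2 - (d:ℝ)) := by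
    rw [← Real.mul_rpow hspos.le (abs_nonneg _)]
    exact Real.rpow_le_rpow_of_nonpos (nrm_pos hx0) h1 (by linarith)
  calc _ = ε * (d * (greenK d * (s ^ (2 - (d:ℝ)) * |(x i : ℝ)| ^ (2 - (d:ℝ))))) := by ring
    _ ≤ _ := by gcongr

lemma srwP_succ (d n : ℕ) (x : Fin d → ℤ) : srwP d (n+1) x =
    (∑ i : Fin d, (srwP d n (x + Pi.single i 1) + srwP d n (x - Pi.single i 1))) / (2 * d) := rfl

lemma srwP_neg (d n : ℕ) (x : Fin d → ℤ) : srwP d n (-x) = srwP d n x := by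
  induction n generalizing x with
  | zero => simp [srwP]
  | succ n ih =>
    rw [srwP_succ, srwP_succ]
    congr 1
    refine Finset.sum_congr rfl fun i _ => ?_
    rw [add_comm, ← ih (x + _), ← ih (x - _)]
    congr 2 <;> abel

lemma srwP_sum_succ (d m : ℕ) (F : Finset (Fin d → ℤ)) (f : (Fin d → ℤ) → ℝ) (a : Fin d → ℤ) :
    ∑ u ∈ F, srwP d (m+1) (u - a) * f u =
    (∑ i : Fin d, (∑ u ∈ F, srwP d m (u - (a - Pi.single i 1)) * f u +
      ∑ u ∈ F, srwP d m (u - (a + Pi.single i 1)) * f u)) / (2 * d) := by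
  simp only [srwP_succ, div_mul_eq_mul_div, ← Finset.sum_div, Finset.sum_mul, add_mul]
  rw [Finset.sum_comm]
  congr 1
  refine Finset.sum_congr rfl fun i _ => ?_
  rw [Finset.sum_add_distrib]
  simp only [sub_add, sub_sub]

lemma srwP_conv_le (d m n : ℕ) (F : Finset (Fin d → ℤ)) (a c : Fin d → ℤ) :
    ∑ u ∈ F, srwP d m (u - a) * srwP d n (c - u) ≤ srwP d (m + n) (c - a) := by
  induction m generalizing a with
  | zero =>
    have h : ∀ u, srwP d 0 (u - a) * srwP d n (c - u) = if u = a then srwP d n (c - a) else 0 := by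
      intro u
      by_cases h : u = a
      · simp [srwP, h]
      · simp [srwP, h, sub_eq_zero]
    simp only [h, Finset.sum_ite_eq', zero_add]
    split_ifs
    · exact le_rfl
    · exact srwP_nonneg _ _ _
  | succ m ih =>
    rw [srwP_sum_succ, Nat.add_right_comm, srwP_succ]
    gcongr with i
    · refine (ih _).trans_eq ?_
      congr 1; abel
    · refine (ih _).trans_eq ?_
      congr 1; abel

lemma srwP_sum_one {d : ℕ} (hd : 0 < d) (s : ℕ) (F : Finset (Fin d → ℤ)) (a : Fin d → ℤ)
    (hF : ∀ u : Fin d → ℤ, (∀ i, |u i - a i| ≤ s) → u ∈ F) :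
    ∑ u ∈ F, srwP d s (u - a) = 1 := by
  induction s generalizing a with
  | zero =>
    have h : ∀ u, srwP d 0 (u - a) = if u = a then 1 else 0 := by
      intro u; simp [srwP, sub_eq_zero]
    simp only [h, Finset.sum_ite_eq']
    rw [if_pos (hF a (by simp))]
  | succ s ih =>
    have h := srwP_sum_succ d s F (fun _ => 1) a
    simp only [mul_one] at h
    rw [h]
    have h1 : ∀ i : Fin d, ∑ u ∈ F, srwP d s (u - (a - Pi.single i 1)) = 1 := by
      intro i
      apply ih
      intro u hu
      apply hF
      intro j
      have h1 := hu j
      have h2 : |(Pi.single i 1 : Fin d → ℤ) j| ≤ 1 := by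
        by_cases hij : j = i
        · subst hij; simp
        · simp [hij]
      simp only [Pi.sub_apply] at h1
      rw [abs_le] at *
      push_cast
      constructor <;> linarith [h1.1, h1.2, h2.1, h2.2]
    have h2 : ∀ i : Fin d, ∑ u ∈ F, srwP d s (u - (a + Pi.single i 1)) = 1 := by
      intro i
      apply ih
      intro u hu
      apply hF
      intro j
      have h1 := hu j
      have h2 : |(Pi.single i 1 : Fin d → ℤ) j| ≤ 1 := by
        by_cases hij : j = i
        · subst hij; simp
        · simp [hij]
      simp only [Pi.add_apply] at h1
      rw [abs_le] at *
      push_cast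
      constructor <;> linarith [h1.1, h1.2, h2.1, h2.2]
    simp only [h1, h2]
    have : (d:ℝ) ≠ 0 := by positivity
    simp
    field_simp
    norm_num

lemma srwP_step_pos {d n : ℕ} {x : Fin d → ℤ} (h : 0 < srwP d n x) (i : Fin d) :
    0 < srwP d (n+1) (x + Pi.single i 1) ∧ 0 < srwP d (n+1) (x - Pi.single i 1) := by
  have hd : (0:ℝ) < d := by exact_mod_cast i.pos
  constructor
  · rw [srwP_succ]
    apply div_pos _ (by positivity)
    refine Finset.sum_pos' (fun j _ => add_nonneg (srwP_nonneg _ _ _) (srwP_nonneg _ _ _))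
      ⟨i, Finset.mem_univ _, ?_⟩
    rw [add_sub_cancel_right]
    exact add_pos_of_nonneg_of_pos (srwP_nonneg _ _ _) h
  · rw [srwP_succ]
    apply div_pos _ (by positivity)
    refine Finset.sum_pos' (fun j _ => add_nonneg (srwP_nonneg _ _ _) (srwP_nonneg _ _ _))
      ⟨i, Finset.mem_univ _, ?_⟩
    rw [sub_add_cancel]
    exact add_pos_of_pos_of_nonneg h (srwP_nonneg _ _ _)

lemma exists_srwP_pos {d : ℕ} (x : Fin d → ℤ) : ∃ n, 0 < srwP d n x := by
  have key : ∀ (k : ℤ) (i : Fin d) (y : Fin d → ℤ), (∃ n, 0 < srwP d n y) →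
      ∃ n, 0 < srwP d n (y + Pi.single i k) := by
    intro k i y hy
    induction k using Int.induction_on with
    | zero => simpa using hy
    | succ k ih =>
      obtain ⟨n, hn⟩ := ih
      refine ⟨n+1, ?_⟩
      have := (srwP_step_pos hn i).1
      rwa [add_assoc, ← Pi.single_add] at this
    | pred k ih =>
      obtain ⟨n, hn⟩ := ih
      refine ⟨n+1, ?_⟩
      have := (srwP_step_pos hn i).2
      rwa [add_sub_assoc, ← Pi.single_sub] at this
  have h2 : ∀ s : Finset (Fin d), ∃ n, 0 < srwP d n (∑ i ∈ s, Pi.single i (x i)) := by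
    intro s
    induction s using Finset.induction_on with
    | empty => exact ⟨0, by simp [srwP]⟩
    | insert i s hi ih =>
      rw [Finset.sum_insert hi, add_comm]
      exact key _ _ _ ih
  have := h2 Finset.univ
  rwa [Finset.univ_sum_single] at this

lemma greenZ_pos {d : ℕ} (hd : 3 ≤ d) (x : Fin d → ℤ) : 0 < greenZ d x := by
  obtain ⟨n, hn⟩ := exists_srwP_pos x
  exact (summable_srwP hd x).1.tsum_pos (fun n => srwP_nonneg _ _ _) n hn

/-- tail of the Green function -/
def Ts (d s : ℕ) (c : Fin d → ℤ) : ℝ := ∑' n : ℕ, srwP d (n + 2 * s) c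

lemma summable_Ts {d : ℕ} (hd : 3 ≤ d) (s : ℕ) (c : Fin d → ℤ) :
    Summable (fun n => srwP d (n + 2 * s) c) :=
  (summable_nat_add_iff (f := fun n => srwP d n c) (2 * s)).2 (summable_srwP hd c).1

lemma Ts_le {d : ℕ} (hd : 3 ≤ d) (s : ℕ) (c : Fin d → ℤ) : Ts d s c ≤ greenZ d c := by
  have := (summable_srwP hd c).1.sum_add_tsum_nat_add (2 * s)
  unfold Ts greenZ
  rw [← this]
  have : 0 ≤ ∑ i ∈ Finset.range (2 * s), srwP d i c := Finset.sum_nonneg fun _ _ => srwP_nonneg _ _ _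
  linarith

lemma Ts_tendsto (d : ℕ) (c : Fin d → ℤ) :
    Filter.Tendsto (fun s => Ts d s c) Filter.atTop (nhds 0) := by
  have h := tendsto_sum_nat_add (fun n => srwP d n c)
  exact h.comp (Filter.tendsto_id.const_mul_atTop' (by norm_num : 0 < 2))

lemma Ts_double {d : ℕ} (hd : 3 ≤ d) (s : ℕ) (F : Finset (Fin d → ℤ)) (a b : Fin d → ℤ) :
    ∑ u ∈ F, ∑ v ∈ F, greenZ d (v - u) * srwP d s (u - a) * srwP d s (v - b) ≤ Ts d s (b - a) := by
  have h1 : HasSum (fun n => ∑ u ∈ F, ∑ v ∈ F, srwP d n (v - u) * srwP d s (u - a) * srwP d s (v - b))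
      (∑ u ∈ F, ∑ v ∈ F, greenZ d (v - u) * srwP d s (u - a) * srwP d s (v - b)) :=
    hasSum_sum fun u _ => hasSum_sum fun v _ =>
      (((summable_srwP hd (v - u)).1.hasSum).mul_right _).mul_right _
  refine hasSum_le (fun n => ?_) h1 (summable_Ts hd s (b - a)).hasSum
  rw [Finset.sum_comm]
  calc _ = ∑ v ∈ F, srwP d s (v - b) * ∑ u ∈ F, srwP d s (u - a) * srwP d n (v - u) := by
        refine Finset.sum_congr rfl fun v _ => ?_
        rw [Finset.mul_sum]
        refine Finset.sum_congr rfl fun u _ => by ring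
    _ ≤ ∑ v ∈ F, srwP d s (v - b) * srwP d (s + n) (v - a) := by
        gcongr with v hv
        · exact srwP_nonneg _ _ _
        · exact srwP_conv_le d s n F a v
    _ = ∑ v ∈ F, srwP d (s + n) (v - a) * srwP d s (b - v) := by
        refine Finset.sum_congr rfl fun v _ => ?_
        rw [mul_comm, ← srwP_neg d s (v - b), neg_sub]
    _ ≤ srwP d (s + n + s) (b - a) := srwP_conv_le d (s + n) s F a b
    _ = _ := by congr 1; ring

lemma srwP_le_one {d : ℕ} (hd : 0 < d) (n : ℕ) (x : Fin d → ℤ) : srwP d n x ≤ 1 := by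
  have h := srwP_sum_one hd n (insert x (Finset.Icc (fun _ => -(n:ℤ)) (fun _ => (n:ℤ)))) 0 (by
    intro u hu
    apply Finset.mem_insert_of_mem
    rw [Finset.mem_Icc]
    exact ⟨fun i => by have := hu i; simp at this; exact (abs_le.1 this).1,
      fun i => by have := hu i; simp at this; exact (abs_le.1 this).2⟩)
  rw [← h]
  have := Finset.single_le_sum (f := fun u => srwP d n (u - 0)) (fun u _ => srwP_nonneg d n (u - 0))
    (Finset.mem_insert_self x (Finset.Icc (fun _ => -(n:ℤ)) (fun _ => (n:ℤ))))
  simpa using this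

/-- set of discrete energies -/
def enSet (d : ℕ) (F : Finset (Fin d → ℤ)) : Set ℝ :=
  {e : ℝ | ∃ w : (Fin d → ℤ) → ℝ, (∀ x, 0 ≤ w x) ∧ (∀ x ∉ F, w x = 0) ∧
      (∑ x ∈ F, w x) = 1 ∧ e = ∑ x ∈ F, ∑ y ∈ F, greenZ d (y - x) * w x * w y}

lemma enSet_nonneg {d : ℕ} (hd : 3 ≤ d) (F : Finset (Fin d → ℤ)) {e : ℝ} (he : e ∈ enSet d F) :
    0 ≤ e := by
  obtain ⟨w, h1, h2, h3, rfl⟩ := he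
  exact Finset.sum_nonneg fun x _ => Finset.sum_nonneg fun y _ =>
    mul_nonneg (mul_nonneg (greenZ_pos hd _).le (h1 x)) (h1 y)

lemma disc_lower {d : ℕ} (hd : 3 ≤ d) (s : ℕ) (F : Finset (Fin d → ℤ))
    (ψ : (Fin d → ℝ) → (Fin d → ℤ)) (hψ : Measurable ψ) (A : Set (Fin d → ℝ))
    (hA : ∀ x ∈ A, ∀ u : Fin d → ℤ, (∀ i, |u i - ψ x i| ≤ s) → u ∈ F) {c : ℝ} (hc : 0 < c)
    (hT : ∀ x ∈ A, ∀ y ∈ A, x ≠ y → Ts d s (ψ y - ψ x) ≤ c * gR (x - y))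
    (μ : Measure (Fin d → ℝ)) [IsProbabilityMeasure μ] (hμ : μ Aᶜ = 0) :
    ENNReal.ofReal (sInf (enSet d F)) ≤ ENNReal.ofReal c * ∫⁻ x, ∫⁻ y, greenE d x y ∂μ ∂μ := by
  have hd0 : 0 < d := by omega
  have hae : ∀ᵐ x ∂μ, x ∈ A := by
    rw [ae_iff]; exact hμ
  have hmeas : ∀ u, Measurable (fun x => srwP d s (u - ψ x)) := fun u =>
    (Measurable.of_discrete (f := fun a => srwP d s (u - a))).comp hψ
  have hIntg : ∀ u, Integrable (fun x => srwP d s (u - ψ x)) μ := fun u =>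
    Integrable.of_bound (hmeas u).aestronglyMeasurable 1 (Filter.Eventually.of_forall fun x => by
      rw [Real.norm_of_nonneg (srwP_nonneg _ _ _)]; exact srwP_le_one hd0 _ _)
  set P : (Fin d → ℤ) → ℝ := fun u => ∫ x, srwP d s (u - ψ x) ∂μ with hP
  have hP0 : ∀ u, 0 ≤ P u := fun u => integral_nonneg fun x => srwP_nonneg _ _ _
  have hPE : ∀ u, ENNReal.ofReal (P u) = ∫⁻ x, ENNReal.ofReal (srwP d s (u - ψ x)) ∂μ := fun u =>
    ofReal_integral_eq_lintegral_ofReal (hIntg u) (Filter.Eventually.of_forall fun x => srwP_nonneg _ _ _)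
  classical
  set w : (Fin d → ℤ) → ℝ := fun u => if u ∈ F then P u else 0 with hw
  have hwF : ∀ u ∈ F, w u = P u := fun u hu => by simp [hw, hu]
  have hmem : ∑ x ∈ F, ∑ y ∈ F, greenZ d (y - x) * w x * w y ∈ enSet d F := by
    refine ⟨w, fun x => ?_, fun x hx => by simp [hw, hx], ?_, rfl⟩
    · simp only [hw]; split_ifs
      · exact hP0 x
      · exact le_rfl
    · rw [Finset.sum_congr rfl hwF, hP, ← integral_finset_sum _ (fun u _ => hIntg u)]
      calc _ = ∫ x, (1:ℝ) ∂μ := by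
            apply integral_congr_ae
            filter_upwards [hae] with x hx
            exact srwP_sum_one hd0 s F (ψ x) (hA x hx)
        _ = 1 := by simp
  have hle : sInf (enSet d F) ≤ ∑ x ∈ F, ∑ y ∈ F, greenZ d (y - x) * w x * w y :=
    csInf_le ⟨0, fun e he => enSet_nonneg hd F he⟩ hmem
  refine (ENNReal.ofReal_le_ofReal hle).trans ?_
  have hp : ∀ u, Measurable (fun x => ENNReal.ofReal (srwP d s (u - ψ x))) := fun u =>
    (hmeas u).ennreal_ofReal
  calc ENNReal.ofReal (∑ x ∈ F, ∑ y ∈ F, greenZ d (y - x) * w x * w y)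
      = ∑ u ∈ F, ∑ v ∈ F, ENNReal.ofReal (greenZ d (v - u)) * ENNReal.ofReal (P u) *
          ENNReal.ofReal (P v) := by
        rw [ENNReal.ofReal_sum_of_nonneg]
        · refine Finset.sum_congr rfl fun u hu => ?_
          rw [ENNReal.ofReal_sum_of_nonneg]
          · refine Finset.sum_congr rfl fun v hv => ?_
            rw [hwF u hu, hwF v hv, ENNReal.ofReal_mul (mul_nonneg (greenZ_pos hd _).le (hP0 _)),
              ENNReal.ofReal_mul (greenZ_pos hd _).le]
          · intro v hv
            rw [hwF u hu, hwF v hv]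
            exact mul_nonneg (mul_nonneg (greenZ_pos hd _).le (hP0 _)) (hP0 _)
        · intro u hu
          refine Finset.sum_nonneg fun v hv => ?_
          rw [hwF u hu, hwF v hv]
          exact mul_nonneg (mul_nonneg (greenZ_pos hd _).le (hP0 _)) (hP0 _)
    _ = ∫⁻ x, ∫⁻ y, ∑ u ∈ F, ∑ v ∈ F, ENNReal.ofReal (greenZ d (v - u)) *
          ENNReal.ofReal (srwP d s (u - ψ x)) * ENNReal.ofReal (srwP d s (v - ψ y)) ∂μ ∂μ := by
        have h1 : ∀ x, ∫⁻ y, ∑ u ∈ F, ∑ v ∈ F, ENNReal.ofReal (greenZ d (v - u)) *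
          ENNReal.ofReal (srwP d s (u - ψ x)) * ENNReal.ofReal (srwP d s (v - ψ y)) ∂μ =
            ∑ u ∈ F, ∑ v ∈ F, ENNReal.ofReal (greenZ d (v - u)) *
              ENNReal.ofReal (srwP d s (u - ψ x)) * ENNReal.ofReal (P v) := by
          intro x
          rw [lintegral_finset_sum _ (fun u _ => Finset.measurable_sum _ fun v _ => (hp v).const_mul _)]
          refine Finset.sum_congr rfl fun u _ => ?_
          rw [lintegral_finset_sum _ (fun v _ => (hp v).const_mul _)]
          refine Finset.sum_congr rfl fun v _ => ?_
          rw [lintegral_const_mul _ (hp v), hPE]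
        simp only [h1]
        rw [lintegral_finset_sum _ (fun u _ => Finset.measurable_sum _ fun v _ =>
          ((hp u).const_mul _).mul_const _)]
        refine Finset.sum_congr rfl fun u _ => ?_
        rw [lintegral_finset_sum _ (fun v _ => ((hp u).const_mul _).mul_const _)]
        refine Finset.sum_congr rfl fun v _ => ?_
        rw [lintegral_mul_const _ ((hp u).const_mul _), lintegral_const_mul _ (hp u), ← hPE u]
    _ ≤ ∫⁻ x, ∫⁻ y, ENNReal.ofReal c * greenE d x y ∂μ ∂μ := by
        apply lintegral_mono_ae
        filter_upwards [hae] with x hx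
        apply lintegral_mono_ae
        filter_upwards [hae] with y hy
        by_cases hxy : x = y
        · rw [greenE, if_pos hxy, ENNReal.mul_top (by simpa using hc)]; exact le_top
        · rw [greenE_ne hxy, ← ENNReal.ofReal_mul hc.le]
          refine le_trans (le_of_eq ?_) (ENNReal.ofReal_le_ofReal
            ((Ts_double hd s F (ψ x) (ψ y)).trans (hT x hx y hy hxy)))
          have h0 : ∀ u v, 0 ≤ greenZ d (v - u) * srwP d s (u - ψ x) * srwP d s (v - ψ y) := fun u v =>
            mul_nonneg (mul_nonneg (greenZ_pos hd _).le (srwP_nonneg _ _ _)) (srwP_nonneg _ _ _)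
          rw [ENNReal.ofReal_sum_of_nonneg (fun u _ => Finset.sum_nonneg fun v _ => h0 u v)]
          refine Finset.sum_congr rfl fun u _ => ?_
          rw [ENNReal.ofReal_sum_of_nonneg (fun v _ => h0 u v)]
          refine Finset.sum_congr rfl fun v _ => ?_
          rw [ENNReal.ofReal_mul (mul_nonneg (greenZ_pos hd _).le (srwP_nonneg _ _ _)),
            ENNReal.ofReal_mul (greenZ_pos hd _).le]
    _ = _ := by
        simp only [lintegral_const_mul' _ _ ENNReal.ofReal_ne_top]

lemma gR_scale {d : ℕ} (hd : 3 ≤ d) {a b : Fin d → ℝ} {κ : ℝ} (hκ : 0 < κ) (hb : b ≠ 0)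
    (h : κ * nrm b ≤ nrm a) : gR a ≤ κ ^ (2 - (d:ℝ)) * gR b := by
  have hdr : (3:ℝ) ≤ d := by exact_mod_cast hd
  have hk := greenK_pos hd
  unfold gR
  have h1 := Real.rpow_le_rpow_of_nonpos (mul_pos hκ (nrm_pos hb)) h (by linarith : 2 - (d:ℝ) ≤ 0)
  rw [Real.mul_rpow hκ.le (nrm_nonneg _)] at h1
  calc _ ≤ greenK d * (κ ^ (2 - (d:ℝ)) * nrm b ^ (2 - (d:ℝ))) := by gcongr
    _ = _ := by ring

lemma exists_theta (d : ℕ) (M : ℝ) {q : ℝ} (hq : 1 < q) :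
    ∃ θ : ℝ, 0 < θ ∧ θ < 1 ∧ 0 < 1 - M * θ ∧ (1 - M * θ) ^ (2 - (d:ℝ)) ≤ q := by
  have h1 : Filter.Tendsto (fun θ : ℝ => 1 - M * θ) (nhds 0) (nhds 1) := by
    have : Continuous (fun θ : ℝ => 1 - M * θ) := by fun_prop
    simpa using this.tendsto 0
  have h2 : Filter.Tendsto (fun θ : ℝ => (1 - M * θ) ^ (2 - (d:ℝ))) (nhds 0) (nhds 1) := by
    have := h1.rpow_const (p := 2 - (d:ℝ)) (Or.inl one_ne_zero)
    simpa using this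
  have h3 := (h1.eventually_const_lt (u := 0) one_pos).and (h2.eventually_le_const hq)
  have h4 : ∀ᶠ θ in nhdsWithin (0:ℝ) (Ioi 0), (0 < θ ∧ θ < 1) ∧
      (0 < 1 - M * θ ∧ (1 - M * θ) ^ (2 - (d:ℝ)) ≤ q) :=
    Filter.Eventually.and (Ioo_mem_nhdsGT one_pos) (h3.filter_mono nhdsWithin_le_nhds)
  obtain ⟨θ, ⟨a, b⟩, c, e⟩ := h4.exists
  exact ⟨θ, a, b, c, e⟩

/-- the separation condition -/
def BoxSep {d : ℕ} (L : ℕ) (𝒞 : Finset (Fin d → ℤ)) : Prop :=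
  ∀ z ∈ 𝒞, ∀ z' ∈ 𝒞, z ≠ z' → ∃ i, (100 * L : ℝ) ≤ |(z i : ℝ) - z' i|

/-- discretisation map on one box -/
def psiz {d : ℕ} (s : ℕ) (θ : ℝ) (z : Fin d → ℤ) (x : Fin d → ℝ) : Fin d → ℤ :=
  fun i => z i + s + ⌊(1 - θ) * (x i - z i)⌋

open Classical in
/-- discretisation map -/
def psi {d : ℕ} (L s : ℕ) (θ : ℝ) (𝒞 : Finset (Fin d → ℤ)) (x : Fin d → ℝ) : Fin d → ℤ :=
  ∑ z ∈ 𝒞, if x ∈ boxR d L z then psiz s θ z x else 0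

lemma mem_boxR {d L : ℕ} {z : Fin d → ℤ} {x : Fin d → ℝ} (h : x ∈ boxR d L z) (i : Fin d) :
    (z i : ℝ) ≤ x i ∧ x i ≤ z i + L := ⟨h.1 i, h.2 i⟩

lemma measurable_psi {d : ℕ} (L s : ℕ) (θ : ℝ) (𝒞 : Finset (Fin d → ℤ)) :
    Measurable (psi L s θ 𝒞) := by
  unfold psi
  refine Finset.measurable_fun_sum _ fun z _ => ?_
  refine Measurable.ite (measurableSet_Icc) ?_ measurable_const
  refine measurable_pi_lambda _ fun i => ?_
  unfold psiz
  have : Measurable (fun x : Fin d → ℝ => ⌊(1 - θ) * (x i - z i)⌋) := by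
    apply Measurable.floor
    fun_prop
  exact this.const_add _

lemma sep_dist {d : ℕ} {L : ℕ} {𝒞 : Finset (Fin d → ℤ)} (hS : BoxSep L 𝒞) {z z' : Fin d → ℤ}
    (hz : z ∈ 𝒞) (hz' : z' ∈ 𝒞) (hne : z ≠ z') {x y : Fin d → ℝ} (hx : x ∈ boxR d L z)
    (hy : y ∈ boxR d L z') : (99 * L : ℝ) ≤ nrm (x - y) := by
  obtain ⟨i, hi⟩ := hS z hz z' hz' hne
  have h1 := mem_boxR hx i
  have h2 := mem_boxR hy i
  refine le_trans ?_ (abs_le_nrm (x - y) i)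
  rw [Pi.sub_apply]
  rcases le_abs.1 hi with h | h
  · refine le_trans ?_ (le_abs_self _); linarith
  · refine le_trans ?_ (neg_le_abs _); linarith

lemma psi_eq {d : ℕ} {L : ℕ} (hL : 1 ≤ L) (s : ℕ) (θ : ℝ) {𝒞 : Finset (Fin d → ℤ)} (hS : BoxSep L 𝒞)
    {z : Fin d → ℤ} (hz : z ∈ 𝒞) {x : Fin d → ℝ} (hx : x ∈ boxR d L z) :
    psi L s θ 𝒞 x = psiz s θ z x := by
  unfold psi
  rw [Finset.sum_eq_single_of_mem z hz, if_pos hx]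
  intro z' hz' hne
  rw [if_neg]
  intro hx'
  have := sep_dist hS hz' hz hne hx' hx
  have h0 : nrm (x - x) = 0 := by simp [nrm]
  rw [h0] at this
  have : (1:ℝ) ≤ L := by exact_mod_cast hL
  linarith

lemma nrm_toR_sub_le {d : ℕ} (a b : Fin d → ℝ) {m : ℝ} (hm : 0 ≤ m) (h : ∀ i, |a i - b i| ≤ m) :
    nrm b - Real.sqrt d * m ≤ nrm a := by
  have h1 := nrm_le (b - a) hm (fun i => by rw [Pi.sub_apply, abs_sub_comm]; exact h i)
  have h2 := nrm_add_le (b - a) a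
  rw [sub_add_cancel] at h2
  linarith

/-- comparison of norms under the discretisation map -/
lemma psi_nrm {d : ℕ} (hd : 3 ≤ d) {L : ℕ} (hL : 1 ≤ L) (s : ℕ) {θ : ℝ} (hθ : 0 < θ) (hθ1 : θ < 1)
    (hs : 2 * (s:ℝ) + 1 ≤ θ * L)
    {𝒞 : Finset (Fin d → ℤ)} (hS : BoxSep L 𝒞) {z z' : Fin d → ℤ} (hz : z ∈ 𝒞) (hz' : z' ∈ 𝒞)
    {x y : Fin d → ℝ} (hx : x ∈ boxR d L z) (hy : y ∈ boxR d L z') :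
    (1 - Real.sqrt d * θ) * nrm (x - y) - Real.sqrt d ≤ nrm (toR (psiz s θ z' y - psiz s θ z x)) := by
  have hdr : (3:ℝ) ≤ d := by exact_mod_cast hd
  have hs1 : 1 ≤ Real.sqrt d := Real.one_le_sqrt.2 (by linarith)
  have hn := nrm_nonneg (x - y)
  have hsym : nrm (x - y) = nrm (y - x) := by rw [← nrm_neg, neg_sub]
  by_cases hne : z = z'
  · subst hne
    have h1 := nrm_toR_sub_le (toR (psiz s θ z y - psiz s θ z x)) ((1 - θ) • (y - x))
      zero_le_one (fun i => by
        have a1 := Int.floor_le ((1 - θ) * (x i - z i))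
        have a2 := Int.lt_floor_add_one ((1 - θ) * (x i - z i))
        have a3 := Int.floor_le ((1 - θ) * (y i - z i))
        have a4 := Int.lt_floor_add_one ((1 - θ) * (y i - z i))
        simp only [toR, psiz, Pi.sub_apply, Pi.smul_apply, smul_eq_mul]
        push_cast
        rw [abs_le]
        constructor <;> nlinarith)
    rw [nrm_smul, abs_of_pos (by linarith), ← hsym] at h1
    nlinarith [mul_nonneg (mul_nonneg (sub_nonneg.2 hs1) hθ.le) hn]
  · have h99 := sep_dist hS hz hz' hne hx hy
    have h1 := nrm_toR_sub_le (toR (psiz s θ z' y - psiz s θ z x)) (y - x) (m := 4 * (θ * L))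
      (by positivity) (fun i => by
        have a1 := Int.floor_le ((1 - θ) * (x i - z i))
        have a2 := Int.lt_floor_add_one ((1 - θ) * (x i - z i))
        have a3 := Int.floor_le ((1 - θ) * (y i - z' i))
        have a4 := Int.lt_floor_add_one ((1 - θ) * (y i - z' i))
        have b1 := mem_boxR hx i
        have b2 := mem_boxR hy i
        have c1 : 0 ≤ θ * (x i - z i) := mul_nonneg hθ.le (by linarith)
        have c2 : 0 ≤ θ * (y i - z' i) := mul_nonneg hθ.le (by linarith)
        have c3 : θ * (x i - z i) ≤ θ * L := mul_le_mul_of_nonneg_left (by linarith) hθ.le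
        have c4 : θ * (y i - z' i) ≤ θ * L := mul_le_mul_of_nonneg_left (by linarith) hθ.le
        have hs0 : (0:ℝ) ≤ s := by positivity
        simp only [toR, psiz, Pi.sub_apply]
        push_cast
        rw [abs_le]
        constructor <;> nlinarith)
    rw [← hsym] at h1
    have h2 : 4 * (θ * L) ≤ θ * nrm (x - y) := by nlinarith
    have h3 : Real.sqrt d * (4 * (θ * L)) ≤ Real.sqrt d * (θ * nrm (x - y)) :=
      mul_le_mul_of_nonneg_left h2 (by linarith)
    nlinarith

lemma psiz_box {d : ℕ} {L : ℕ} (s : ℕ) {θ : ℝ} (hθ1 : θ < 1)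
    (hs : 2 * (s:ℝ) + 1 ≤ θ * L) {z : Fin d → ℤ} {x : Fin d → ℝ} (hx : x ∈ boxR d L z)
    (u : Fin d → ℤ) (hu : ∀ i, |u i - psiz s θ z x i| ≤ s) : u ∈ boxZ d L z := by
  rw [boxZ, Finset.mem_Icc]
  have key : ∀ i, 0 ≤ ⌊(1 - θ) * (x i - z i)⌋ ∧ ⌊(1 - θ) * (x i - z i)⌋ + 2 * s + 1 ≤ (L:ℤ) := by
    intro i
    have b1 := mem_boxR hx i
    constructor
    · exact Int.floor_nonneg.2 (mul_nonneg (by linarith) (by linarith))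
    · have a1 := Int.floor_le ((1 - θ) * (x i - z i))
      have : (1 - θ) * (x i - z i) ≤ (1 - θ) * L := mul_le_mul_of_nonneg_left (by linarith) (by linarith)
      have : ((⌊(1 - θ) * (x i - z i)⌋ + 2 * s + 1 : ℤ) : ℝ) ≤ ((L:ℤ) : ℝ) := by
        push_cast; linarith
      exact_mod_cast this
  constructor <;> intro i
  · have h1 := abs_le.1 (hu i); have h2 := key i
    simp only [psiz] at h1; linarith [h1.1, h1.2, h2.1, h2.2]
  · have h1 := abs_le.1 (hu i); have h2 := key i
    simp only [psiz] at h1 ⊢; linarith [h1.1, h1.2, h2.1, h2.2]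

lemma psiz_diff {d : ℕ} (s : ℕ) {θ : ℝ} (hθ : 0 < θ) (hθ1 : θ < 1) (z : Fin d → ℤ)
    (x y : Fin d → ℝ) {N : ℕ} (hN : nrm (x - y) + 1 ≤ N) :
    psiz s θ z y - psiz s θ z x ∈ Finset.Icc (fun _ : Fin d => -(N:ℤ)) (fun _ => (N:ℤ)) := by
  have key : ∀ i, |((psiz s θ z y - psiz s θ z x) i : ℝ)| ≤ N := by
    intro i
    have a1 := Int.floor_le ((1 - θ) * (x i - z i))
    have a2 := Int.lt_floor_add_one ((1 - θ) * (x i - z i))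
    have a3 := Int.floor_le ((1 - θ) * (y i - z i))
    have a4 := Int.lt_floor_add_one ((1 - θ) * (y i - z i))
    have h := abs_le_nrm (x - y) i
    rw [Pi.sub_apply] at h
    have h' : |(1 - θ) * (x i - y i)| ≤ nrm (x - y) := by
      rw [abs_mul, abs_of_pos (by linarith : 0 < 1 - θ)]
      nlinarith [abs_nonneg (x i - y i)]
    rw [abs_le] at h'
    simp only [psiz, Pi.sub_apply]
    push_cast
    rw [abs_le]
    constructor <;> nlinarith
  have key' : ∀ i, |(psiz s θ z y - psiz s θ z x) i| ≤ (N:ℤ) := by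
    intro i; exact_mod_cast key i
  rw [Finset.mem_Icc]
  exact ⟨fun i => (abs_le.1 (key' i)).1, fun i => (abs_le.1 (key' i)).2⟩

lemma dir1 {d : ℕ} (hd : 3 ≤ d) {ε : ℝ} (hε : 0 < ε) :
    ∃ L₁ : ℕ, ∀ L : ℕ, L₁ ≤ L → 1 ≤ L → ∀ 𝒞 : Finset (Fin d → ℤ), BoxSep L 𝒞 →
      ∀ μ : Measure (Fin d → ℝ), IsProbabilityMeasure μ → μ (⋃ z ∈ 𝒞, boxR d L z)ᶜ = 0 →
      ENNReal.ofReal (sInf (enSet d (𝒞.biUnion (boxZ d L)))) ≤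
        ENNReal.ofReal ((1 + ε) * d) * ∫⁻ x, ∫⁻ y, greenE d x y ∂μ ∂μ := by
  have hdr : (3:ℝ) ≤ d := by exact_mod_cast hd
  set D := Real.sqrt d with hD
  have hD1 : 1 ≤ D := Real.one_le_sqrt.2 (by linarith)
  have hk := greenK_pos hd
  set q := Real.sqrt (1 + ε) with hq
  have hqq : q * q = 1 + ε := Real.mul_self_sqrt (by linarith)
  have hq1 : 1 < q := by
    rw [hq]; exact Real.lt_sqrt_of_sq_lt (by linarith)
  obtain ⟨R, hR, HR⟩ := green_asymp hd (ε := q - 1) (by linarith)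
  obtain ⟨θ, hθ, hθ1, hκ, hκq⟩ := exists_theta d (2 * D) hq1
  set κ := 1 - 2 * D * θ with hκdef
  set R1 := max (1 / θ) (R / κ) with hR1
  have hR1pos : 0 < R1 := lt_max_of_lt_left (by positivity)
  set N := ⌈R1 + 1⌉₊ with hN
  set m := (1 + ε) * d * (greenK d * R1 ^ (2 - (d:ℝ))) with hm
  have hmpos : 0 < m := by positivity
  have hev : ∀ᶠ s in Filter.atTop, ∀ c ∈ Finset.Icc (fun _ : Fin d => -(N:ℤ)) (fun _ => (N:ℤ)),
      Ts d s c ≤ m :=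
    (Filter.eventually_all_finset _).2 fun c _ => (Ts_tendsto d c).eventually_le_const hmpos
  obtain ⟨s, hs⟩ := hev.exists
  refine ⟨max ⌈(2 * (s:ℝ) + 1) / θ⌉₊ ⌈R1⌉₊, fun L hL hL1 𝒞 hS μ hμ hμA => ?_⟩
  have hLs : 2 * (s:ℝ) + 1 ≤ θ * L := by
    have : (2 * (s:ℝ) + 1) / θ ≤ L := (Nat.le_ceil _).trans
      (by exact_mod_cast (le_max_left _ _).trans hL)
    rwa [div_le_iff₀' hθ] at this
  have hLR : R1 ≤ L := (Nat.le_ceil _).trans (by exact_mod_cast (le_max_right _ _).trans hL)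
  refine disc_lower hd s _ (psi L s θ 𝒞) (measurable_psi L s θ 𝒞) (⋃ z ∈ 𝒞, boxR d L z) ?_
    (by positivity) ?_ μ hμA
  · intro x hx u hu
    simp only [mem_iUnion, exists_prop] at hx
    obtain ⟨z, hz, hx⟩ := hx
    rw [psi_eq hL1 s θ hS hz hx] at hu
    exact Finset.mem_biUnion.2 ⟨z, hz, psiz_box s hθ1 hLs hx u hu⟩
  · intro x hx y hy hxy
    simp only [mem_iUnion, exists_prop] at hx hy
    obtain ⟨z, hz, hx⟩ := hx
    obtain ⟨z', hz', hy⟩ := hy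
    rw [psi_eq hL1 s θ hS hz hx, psi_eq hL1 s θ hS hz' hy]
    have hab : x - y ≠ 0 := sub_ne_zero.2 hxy
    have hρ := nrm_pos hab
    by_cases hfar : R1 ≤ nrm (x - y)
    · have h1 := psi_nrm hd hL1 s hθ hθ1 hLs hS hz hz' hx hy
      have h2 : 1 / θ ≤ nrm (x - y) := (le_max_left _ _).trans hfar
      have h3 : R / κ ≤ nrm (x - y) := (le_max_right _ _).trans hfar
      rw [div_le_iff₀' hθ] at h2
      rw [div_le_iff₀' hκ] at h3
      have h4 : κ * nrm (x - y) ≤ nrm (toR (psiz s θ z' y - psiz s θ z x)) := by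
        refine le_trans ?_ h1
        rw [hκdef]; nlinarith
      have h5 := HR _ (h3.trans h4)
      have h6 := gR_scale hd hκ hab h4
      have h7 := (abs_le.1 h5).2
      have h8 := Ts_le hd s (psiz s θ z' y - psiz s θ z x)
      have h9 := gR_nonneg hd (x - y)
      calc _ ≤ q * (d * gR (toR (psiz s θ z' y - psiz s θ z x))) := by linarith
        _ ≤ q * (d * (q * gR (x - y))) := by
          gcongr
          exact h6.trans (by gcongr)
        _ = _ := by rw [← hqq]; ring
    · push Not at hfar
      have hzz : z = z' := by
        by_contra hne
        have := sep_dist hS hz hz' hne hx hy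
        linarith
      subst hzz
      have h1 := hs _ (psiz_diff s hθ hθ1 z x y (N := N) (by
        refine le_trans ?_ (Nat.le_ceil _); linarith))
      refine h1.trans ?_
      rw [hm]
      unfold gR
      have := Real.rpow_le_rpow_of_nonpos hρ hfar.le (by linarith : 2 - (d:ℝ) ≤ 0)
      gcongr

lemma gk_mul_gaussian {t : ℝ} (ht : 0 < t) {v : NNReal} (hv : 0 < v) (c u : ℝ) :
    ProbabilityTheory.gaussianPDFReal 0 v u * gk t (c + u) =
    gk (t + v) c * ProbabilityTheory.gaussianPDFReal (-(c * v / (t + v)))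
      (⟨t, ht.le⟩ * v / (⟨t, ht.le⟩ + v)) u := by
  have hv' : (0:ℝ) < v := hv
  have hpi := Real.pi_pos
  simp only [ProbabilityTheory.gaussianPDFReal, gk]
  push_cast
  rw [mul_mul_mul_comm, mul_mul_mul_comm (Real.sqrt (2 * Real.pi * (t + v)))⁻¹, ← Real.exp_add,
    ← Real.exp_add, ← mul_inv, ← mul_inv, ← Real.sqrt_mul (by positivity), ← Real.sqrt_mul (by positivity)]
  have htv : 0 < t + v := by positivity
  congr 1
  · congr 2
    change _ = 2 * Real.pi * (t + v) * (2 * Real.pi * (t * v / (t + v)))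
    field_simp
  · congr 1
    change _ = _ + - (u - -(c * v / (t + v))) ^ 2 / (2 * (t * v / (t + v)))
    field_simp
    ring

lemma integral_gk_gaussian {t : ℝ} (ht : 0 < t) {v : NNReal} (hv : 0 < v) (c : ℝ) :
    ∫ u, gk t (c + u) ∂(ProbabilityTheory.gaussianReal 0 v) = gk (t + v) c := by
  rw [ProbabilityTheory.integral_gaussianReal_eq_integral_smul hv.ne']
  simp only [smul_eq_mul, gk_mul_gaussian ht hv]
  rw [integral_const_mul, ProbabilityTheory.integral_gaussianPDFReal_eq_one, mul_one]
  have : (0:NNReal) < ⟨t, ht.le⟩ := ht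
  exact ne_of_gt (div_pos (mul_pos this hv) (add_pos this hv))

/-- the centred Gaussian measure with covariance `v I` -/
def GN (d : ℕ) (v : NNReal) : Measure (Fin d → ℝ) :=
  Measure.pi fun _ => ProbabilityTheory.gaussianReal 0 v

instance instGN (d : ℕ) (v : NNReal) : IsProbabilityMeasure (GN d v) := by
  unfold GN; infer_instance

lemma measurable_gk2 (t : ℝ) : Measurable (gk t) := by
  unfold gk; fun_prop

lemma lintegral_Gd_gaussian {d : ℕ} {t : ℝ} (ht : 0 < t) {v : NNReal} (hv : 0 < v) (c : Fin d → ℝ) :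
    ∫⁻ u, ENNReal.ofReal (Gd t (c + u)) ∂(GN d v) = ENNReal.ofReal (Gd (t + v) c) := by
  have hi : ∀ i, Integrable (fun u => gk t (c i + u)) (ProbabilityTheory.gaussianReal 0 v) := fun i =>
    Integrable.of_bound ((measurable_gk2 t).comp (measurable_const_add (c i))).aestronglyMeasurable
      (1 / Real.sqrt t) (Filter.Eventually.of_forall fun u => by
        rw [Real.norm_of_nonneg (gk_nonneg _ _)]; exact gk_le' ht _)
  have hI : Integrable (fun u : Fin d → ℝ => ∏ i, gk t (c i + u i)) (GN d v) :=
    Integrable.fintype_prod (f := fun i u => gk t (c i + u)) hi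
  have h := ofReal_integral_eq_lintegral_ofReal hI
    (Filter.Eventually.of_forall fun u => Finset.prod_nonneg fun i _ => gk_nonneg _ _)
  unfold Gd
  simp only [Pi.add_apply]
  rw [← h]
  congr 1
  unfold GN
  rw [integral_fintype_prod_eq_prod (fun i u => gk t (c i + u))]
  exact Finset.prod_congr rfl fun i _ => integral_gk_gaussian ht hv _

lemma Gd_neg {d : ℕ} (t : ℝ) (a : Fin d → ℝ) : Gd t (-a) = Gd t a := by
  simp [Gd, gk]

lemma lintegral_Gd_gaussian' {d : ℕ} {t : ℝ} (ht : 0 < t) {v : NNReal} (hv : 0 < v) (c : Fin d → ℝ) :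
    ∫⁻ u, ENNReal.ofReal (Gd t (c - u)) ∂(GN d v) = ENNReal.ofReal (Gd (t + v) c) := by
  have : ∀ u, Gd t (c - u) = Gd t (-c + u) := fun u => by rw [← Gd_neg]; congr 1; abel
  simp only [this]
  rw [lintegral_Gd_gaussian ht hv, Gd_neg]

lemma measurable_Gd_joint {α : Type*} [MeasurableSpace α] {d : ℕ} {f : α → ℝ} {g : α → Fin d → ℝ}
    (hf : Measurable f) (hg : Measurable g) : Measurable (fun p => Gd (f p) (g p)) := by
  unfold Gd gk
  refine Finset.measurable_fun_prod _ fun i _ => ?_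
  have : Measurable fun p => g p i := (measurable_pi_apply i).comp hg
  fun_prop

/-- smoothed Green function -/
def Iv {d : ℕ} (v : NNReal) (c : Fin d → ℝ) : ℝ≥0∞ :=
  ∫⁻ t in Ioi (0:ℝ), ENNReal.ofReal (Gd (t + v + v) c)

lemma greenE_smooth {d : ℕ} (hd : 3 ≤ d) {v : NNReal} (hv : 0 < v) (α β : Fin d → ℝ) :
    ∫⁻ a, ∫⁻ b, greenE d (α + a) (β + b) ∂(GN d v) ∂(GN d v) = Iv v (α - β) := by
  have hv' : (0:ℝ) < v := hv
  simp only [← lintegral_Gd hd]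
  have h1 : ∀ a : Fin d → ℝ, ∫⁻ b, (∫⁻ t in Ioi (0:ℝ), ENNReal.ofReal (Gd t (α + a - (β + b)))) ∂(GN d v) =
      ∫⁻ t in Ioi (0:ℝ), ENNReal.ofReal (Gd (t + v) (α - β + a)) := by
    intro a
    rw [lintegral_lintegral_swap]
    · refine setLIntegral_congr_fun measurableSet_Ioi fun t ht => ?_
      have : ∀ b, α + a - (β + b) = (α - β + a) - b := fun b => by abel
      simp only [this]
      exact lintegral_Gd_gaussian' ht hv _
    · exact (measurable_Gd_joint measurable_snd (by fun_prop)).ennreal_ofReal.aemeasurable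
  simp only [h1]
  rw [lintegral_lintegral_swap]
  · refine setLIntegral_congr_fun measurableSet_Ioi fun t ht => ?_
    have ht : 0 < t := ht
    exact lintegral_Gd_gaussian (by positivity) hv _
  · exact (measurable_Gd_joint (measurable_snd.add_const _) (by fun_prop)).ennreal_ofReal.aemeasurable

lemma lintegral_shift (f : ℝ → ℝ≥0∞) (a : ℝ) :
    ∫⁻ t in Ioi (0:ℝ), f (t + a) = ∫⁻ t in Ioi a, f t := by
  rw [← lintegral_indicator measurableSet_Ioi, ← lintegral_indicator measurableSet_Ioi,
    ← lintegral_add_right_eq_self ((Ioi a).indicator f) a]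
  congr 1; ext t
  simp [indicator, mem_Ioi]

lemma Iv_eq {d : ℕ} (v : NNReal) (c : Fin d → ℝ) :
    Iv v c = ∫⁻ t in Ioi (v + v : ℝ), ENNReal.ofReal (Gd t c) := by
  rw [← lintegral_shift]; simp only [Iv, add_assoc]

lemma Iv_le_gR {d : ℕ} (hd : 3 ≤ d) (v : NNReal) {c : Fin d → ℝ} (hc : c ≠ 0) :
    Iv v c ≤ ENNReal.ofReal (gR c) := by
  have h := lintegral_Gd hd c 0
  rw [greenE_ne hc, sub_zero] at h
  rw [← h, Iv_eq]
  exact lintegral_mono_set (Ioi_subset_Ioi (by positivity))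

lemma Iv_le_tail {d : ℕ} (hd : 3 ≤ d) {v : NNReal} (hv : 0 < v) (c : Fin d → ℝ) :
    Iv v c ≤ ENNReal.ofReal ((v + v : ℝ) ^ (1 - (d:ℝ)/2) / ((d:ℝ)/2 - 1)) := by
  have hv' : (0:ℝ) < v := hv
  obtain ⟨h1, h2⟩ := integrable_tail hd (A := (v + v : ℝ)) (by positivity)
  rw [Iv_eq, ← h2, ofReal_integral_eq_lintegral_ofReal h1
    (Filter.Eventually.of_forall fun t => by positivity)]
  refine setLIntegral_mono_ae' measurableSet_Ioi (Filter.Eventually.of_forall fun t ht => ?_)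
  have ht : (v + v : ℝ) < t := ht
  exact ENNReal.ofReal_le_ofReal (Gd_le_sqrt (by linarith) c)

lemma measurable_greenE (d : ℕ) : Measurable (fun p : (Fin d → ℝ) × (Fin d → ℝ) => greenE d p.1 p.2) := by
  unfold greenE
  refine Measurable.ite (measurableSet_eq_fun measurable_fst measurable_snd) measurable_const ?_
  have : Measurable (fun p : (Fin d → ℝ) × (Fin d → ℝ) => Real.sqrt (∑ i, (p.1 i - p.2 i)^2)) := by
    fun_prop
  exact ((this.pow_const _).const_mul _).ennreal_ofReal

/-- minimal Brownian energy -/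
def brInf (d : ℕ) (A : Set (Fin d → ℝ)) : ℝ≥0∞ :=
  ⨅ μ ∈ {μ : Measure (Fin d → ℝ) | IsProbabilityMeasure μ ∧ μ Aᶜ = 0},
    ∫⁻ x, ∫⁻ y, greenE d x y ∂μ ∂μ

/-- the cube of radius `r` -/
def cube (d : ℕ) (r : ℝ) : Set (Fin d → ℝ) := Icc (fun _ => -r) (fun _ => r)

/-- law of the truncated Gaussian around `p` -/
def trG (d : ℕ) (v : NNReal) (r : ℝ) (p : Fin d → ℝ) : Measure (Fin d → ℝ) :=
  ((GN d v (cube d r))⁻¹ • (GN d v).restrict (cube d r)).map (fun u => p + u)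

lemma trG_energy {d : ℕ} (hd : 3 ≤ d) {v : NNReal} (hv : 0 < v) (r : ℝ) (p p' : Fin d → ℝ) :
    ∫⁻ x, ∫⁻ y, greenE d x y ∂(trG d v r p') ∂(trG d v r p) ≤
      (GN d v (cube d r))⁻¹ * ((GN d v (cube d r))⁻¹ * Iv v (p - p')) := by
  have hm : ∀ x : Fin d → ℝ, Measurable (fun y => greenE d x y) := fun x =>
    (measurable_greenE d).comp measurable_prodMk_left
  have h1 : ∀ x, ∫⁻ y, greenE d x y ∂(trG d v r p') ≤
      (GN d v (cube d r))⁻¹ * ∫⁻ b, greenE d x (p' + b) ∂(GN d v) := by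
    intro x
    unfold trG
    rw [lintegral_map (hm x) (measurable_const_add p'), lintegral_smul_measure, smul_eq_mul]
    gcongr
    exact Measure.restrict_le_self
  have hm2 : Measurable (fun x => (GN d v (cube d r))⁻¹ * ∫⁻ b, greenE d x (p' + b) ∂(GN d v)) := by
    refine Measurable.const_mul ?_ _
    apply Measurable.lintegral_prod_right'
      (f := fun q : (Fin d → ℝ) × (Fin d → ℝ) => greenE d q.1 (p' + q.2))
    exact (measurable_greenE d).comp (measurable_fst.prodMk (measurable_snd.const_add p'))
  refine (lintegral_mono h1).trans ?_
  conv_lhs => unfold trG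
  rw [lintegral_map hm2 (measurable_const_add p), lintegral_smul_measure, smul_eq_mul]
  refine mul_le_mul_right ?_ _
  refine (lintegral_mono' Measure.restrict_le_self le_rfl).trans ?_
  have hm3 : Measurable (fun a => ∫⁻ b, greenE d (p + a) (p' + b) ∂(GN d v)) := by
    apply Measurable.lintegral_prod_right'
      (f := fun q : (Fin d → ℝ) × (Fin d → ℝ) => greenE d (p + q.1) (p' + q.2))
    exact (measurable_greenE d).comp ((measurable_fst.const_add p).prodMk (measurable_snd.const_add p'))
  rw [lintegral_const_mul _ hm3, greenE_smooth hd hv]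

lemma brown_upper {d : ℕ} (hd : 3 ≤ d) {v : NNReal} (hv : 0 < v) (r : ℝ) (F : Finset (Fin d → ℤ))
    (φ : (Fin d → ℤ) → (Fin d → ℝ)) (A : Set (Fin d → ℝ)) (hAm : MeasurableSet A)
    (hA : ∀ x ∈ F, ∀ u ∈ cube d r, φ x + u ∈ A) (hM : GN d v (cube d r) ≠ 0) {c : ℝ} (hc : 0 ≤ c)
    (hI : ∀ x ∈ F, ∀ y ∈ F, Iv v (φ x - φ y) ≤ ENNReal.ofReal (c * greenZ d (y - x)))
    {e : ℝ} (he : e ∈ enSet d F) :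
    brInf d A ≤ (GN d v (cube d r))⁻¹ * ((GN d v (cube d r))⁻¹ * ENNReal.ofReal (c * e)) := by
  obtain ⟨w, hw0, hwF, hw1, rfl⟩ := he
  set M := GN d v (cube d r) with hMdef
  have hMtop : M ≠ ⊤ := measure_ne_top _ _
  set μ : Measure (Fin d → ℝ) := ∑ x ∈ F, ENNReal.ofReal (w x) • trG d v r (φ x) with hμ
  have htr : ∀ p, trG d v r p univ = 1 := by
    intro p
    unfold trG
    rw [Measure.map_apply (measurable_const_add p) MeasurableSet.univ]
    simp only [preimage_univ, Measure.smul_apply, smul_eq_mul, Measure.restrict_apply MeasurableSet.univ,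
      univ_inter]
    exact ENNReal.inv_mul_cancel hM hMtop
  have hsf : ∀ p, IsProbabilityMeasure (trG d v r p) := fun p => ⟨htr p⟩
  have hμp : IsProbabilityMeasure μ := by
    constructor
    rw [hμ, Measure.finsetSum_apply]
    simp only [Measure.smul_apply, smul_eq_mul, htr, mul_one]
    rw [← ENNReal.ofReal_sum_of_nonneg fun x _ => hw0 x, hw1, ENNReal.ofReal_one]
  have hμA : μ Aᶜ = 0 := by
    rw [hμ, Measure.finsetSum_apply]
    refine Finset.sum_eq_zero fun x hx => ?_
    rw [Measure.smul_apply, smul_eq_mul]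
    have : trG d v r (φ x) Aᶜ = 0 := by
      unfold trG
      rw [Measure.map_apply (measurable_const_add _) hAm.compl, Measure.smul_apply, smul_eq_mul,
        Measure.restrict_apply ((measurable_const_add _) hAm.compl)]
      have : (fun u => φ x + u) ⁻¹' Aᶜ ∩ cube d r = ∅ := by
        ext u
        simp only [mem_inter_iff, mem_preimage, mem_compl_iff, mem_empty_iff_false, iff_false, not_and]
        intro h1 h2
        exact h1 (hA x hx u h2)
      rw [this]; simp
    rw [this, mul_zero]
  have hle : brInf d A ≤ ∫⁻ x, ∫⁻ y, greenE d x y ∂μ ∂μ := iInf₂_le μ ⟨hμp, hμA⟩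
  refine hle.trans ?_
  have hm : ∀ p, Measurable (fun x => ∫⁻ y, greenE d x y ∂(trG d v r p)) := fun p =>
    Measurable.lintegral_prod_right' (f := fun q : (Fin d → ℝ) × (Fin d → ℝ) => greenE d q.1 q.2)
      (measurable_greenE d)
  calc ∫⁻ x, ∫⁻ y, greenE d x y ∂μ ∂μ
      = ∑ x ∈ F, ENNReal.ofReal (w x) * ∑ y ∈ F, ENNReal.ofReal (w y) *
        ∫⁻ a, ∫⁻ b, greenE d a b ∂(trG d v r (φ y)) ∂(trG d v r (φ x)) := by
        have h1 : ∀ a, ∫⁻ b, greenE d a b ∂μ =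
            ∑ y ∈ F, ENNReal.ofReal (w y) * ∫⁻ b, greenE d a b ∂(trG d v r (φ y)) := by
          intro a
          rw [hμ, lintegral_finsetSum_measure]
          simp only [lintegral_smul_measure, smul_eq_mul]
        simp only [h1]
        rw [hμ, lintegral_finsetSum_measure]
        refine Finset.sum_congr rfl fun x _ => ?_
        rw [lintegral_smul_measure, smul_eq_mul,
          lintegral_finset_sum _ (fun y _ => (hm (φ y)).const_mul _)]
        congr 1
        refine Finset.sum_congr rfl fun y _ => ?_
        rw [lintegral_const_mul _ (hm (φ y))]
    _ ≤ ∑ x ∈ F, ENNReal.ofReal (w x) * ∑ y ∈ F, ENNReal.ofReal (w y) *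
        (M⁻¹ * (M⁻¹ * ENNReal.ofReal (c * greenZ d (y - x)))) := by
        gcongr with x hx y hy
        refine (trG_energy hd hv r _ _).trans ?_
        gcongr
        exact hI x hx y hy
    _ = M⁻¹ * (M⁻¹ * ∑ x ∈ F, ∑ y ∈ F,
          ENNReal.ofReal (c * (greenZ d (y - x) * w x * w y))) := by
        simp only [Finset.mul_sum]
        refine Finset.sum_congr rfl fun x _ => Finset.sum_congr rfl fun y _ => ?_
        rw [show c * (greenZ d (y - x) * w x * w y) = w x * (w y * (c * greenZ d (y - x))) by ring,
          ENNReal.ofReal_mul (hw0 x), ENNReal.ofReal_mul (hw0 y)]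
        ring
    _ = _ := by
        have h0 : ∀ x y, 0 ≤ c * (greenZ d (y - x) * w x * w y) := fun x y =>
          mul_nonneg hc (mul_nonneg (mul_nonneg (greenZ_pos hd _).le (hw0 x)) (hw0 y))
        rw [Finset.mul_sum F _ c, ENNReal.ofReal_sum_of_nonneg (fun x _ => by
          rw [Finset.mul_sum]; exact Finset.sum_nonneg fun y _ => h0 x y)]
        congr 2
        refine Finset.sum_congr rfl fun x _ => ?_
        rw [Finset.mul_sum, ENNReal.ofReal_sum_of_nonneg (fun y _ => h0 x y)]

lemma exists_cube {d : ℕ} (v : NNReal) {q : ℝ} (hq : 1 < q) :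
    ∃ r : ℝ, 0 < r ∧ GN d v (cube d r) ≠ 0 ∧
      (GN d v (cube d r))⁻¹ * (GN d v (cube d r))⁻¹ ≤ ENNReal.ofReal q := by
  have h1 : Filter.Tendsto (fun n : ℕ => GN d v (cube d n)) Filter.atTop (nhds 1) := by
    have hmono : Monotone (fun n : ℕ => cube d (n:ℝ)) := by
      intro a b hab
      have : (a:ℝ) ≤ b := by exact_mod_cast hab
      exact Icc_subset_Icc (fun _ => by simpa using this) (fun _ => by simpa using this)
    have hU : ⋃ n : ℕ, cube d (n:ℝ) = univ := by
      rw [eq_univ_iff_forall]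
      intro x
      obtain ⟨n, hn⟩ := exists_nat_ge (nrm x)
      refine mem_iUnion.2 ⟨n, ?_⟩
      exact ⟨fun i => (abs_le.1 ((abs_le_nrm x i).trans hn)).1,
        fun i => (abs_le.1 ((abs_le_nrm x i).trans hn)).2⟩
    have := tendsto_measure_iUnion_atTop (μ := GN d v) hmono
    rwa [hU, measure_univ] at this
  have h2 : Filter.Tendsto (fun n : ℕ => (GN d v (cube d n))⁻¹) Filter.atTop (nhds 1) := by
    have := tendsto_inv_iff.2 h1
    simpa using this
  have h3 : Filter.Tendsto (fun n : ℕ => (GN d v (cube d n))⁻¹ * (GN d v (cube d n))⁻¹)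
      Filter.atTop (nhds 1) := by
    have := ENNReal.Tendsto.mul h2 (Or.inl one_ne_zero) h2 (Or.inl one_ne_zero)
    simpa using this
  have h4 := h3.eventually_le_const (u := ENNReal.ofReal q) (by
    rw [← ENNReal.ofReal_one]; exact (ENNReal.ofReal_lt_ofReal_iff (by linarith)).2 hq)
  have h5 := h1.eventually_const_lt (u := 0) one_pos
  obtain ⟨n, ⟨ha, hb⟩, hc⟩ := ((h4.and h5).and (Filter.eventually_gt_atTop 0)).exists
  exact ⟨n, by exact_mod_cast hc, hb.ne', ha⟩

/-- contraction map on one box -/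
def phiz {d : ℕ} (r θ : ℝ) (z x : Fin d → ℤ) : Fin d → ℝ :=
  fun i => z i + r + (1 - θ) * (x i - z i)

lemma toR_mem {d L : ℕ} {z x : Fin d → ℤ} (hx : x ∈ boxZ d L z) : toR x ∈ boxR d L z := by
  rw [boxZ, Finset.mem_Icc] at hx
  constructor <;> intro i
  · have := hx.1 i
    simp only [toR]; exact_mod_cast this
  · have h : x i ≤ z i + L - 1 := hx.2 i
    have : x i ≤ z i + L := by linarith
    simp only [toR]; exact_mod_cast this

lemma phiz_box {d L : ℕ} {r θ : ℝ} (hθ1 : θ < 1) (hr : 2 * r ≤ θ * L)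
    {z x : Fin d → ℤ} (hx : x ∈ boxZ d L z) {u : Fin d → ℝ} (hu : u ∈ cube d r) :
    phiz r θ z x + u ∈ boxR d L z := by
  have h := toR_mem hx
  have key : ∀ i, (z i : ℝ) ≤ z i + r + (1 - θ) * (x i - z i) + u i ∧
      z i + r + (1 - θ) * (x i - z i) + u i ≤ (z i : ℝ) + L := by
    intro i
    have h1 := mem_boxR h i
    simp only [toR] at h1
    have h2 : -r ≤ u i := hu.1 i
    have h3 : u i ≤ r := hu.2 i
    have h4 : 0 ≤ (1 - θ) * (x i - z i) := mul_nonneg (by linarith) (by linarith)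
    have h5 : (1 - θ) * (x i - z i) ≤ (1 - θ) * L := mul_le_mul_of_nonneg_left (by linarith) (by linarith)
    constructor <;> linarith
  exact ⟨fun i => (key i).1, fun i => (key i).2⟩

lemma phiz_nrm {d : ℕ} (hd : 3 ≤ d) {L : ℕ} {r θ : ℝ} (hr0 : 0 < r) (hθ : 0 < θ)
    (hθ1 : θ < 1) (hr : 2 * r ≤ θ * L) {𝒞 : Finset (Fin d → ℤ)} (hS : BoxSep L 𝒞)
    {z z' : Fin d → ℤ} (hz : z ∈ 𝒞) (hz' : z' ∈ 𝒞) {x y : Fin d → ℤ} (hx : x ∈ boxZ d L z)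
    (hy : y ∈ boxZ d L z') :
    (1 - Real.sqrt d * θ) * nrm (toR (y - x)) ≤ nrm (phiz r θ z x - phiz r θ z' y) := by
  have hdr : (3:ℝ) ≤ d := by exact_mod_cast hd
  have hs1 : 1 ≤ Real.sqrt d := Real.one_le_sqrt.2 (by linarith)
  have hsym : nrm (toR (y - x)) = nrm (toR x - toR y) := by
    rw [← nrm_neg]; congr 1; ext i; simp [toR]
  have hn := nrm_nonneg (toR x - toR y)
  rw [hsym]
  by_cases hne : z = z'
  · subst hne
    have h1 : phiz r θ z x - phiz r θ z y = (1 - θ) • (toR x - toR y) := by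
      ext i; simp only [phiz, toR, Pi.sub_apply, Pi.smul_apply, smul_eq_mul]; ring
    rw [h1, nrm_smul, abs_of_pos (by linarith)]
    nlinarith [mul_nonneg (mul_nonneg (sub_nonneg.2 hs1) hθ.le) hn]
  · have h99 := sep_dist hS hz hz' hne (toR_mem hx) (toR_mem hy)
    have hL0 : (0:ℝ) ≤ L := by positivity
    have h1 := nrm_toR_sub_le (phiz r θ z x - phiz r θ z' y) (toR x - toR y) (m := 2 * (θ * L))
      (by positivity) (fun i => by
        have b1 := mem_boxR (toR_mem hx) i
        have b2 := mem_boxR (toR_mem hy) i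
        simp only [toR] at b1 b2
        have c1 : 0 ≤ θ * (x i - z i) := mul_nonneg hθ.le (by linarith)
        have c2 : 0 ≤ θ * (y i - z' i) := mul_nonneg hθ.le (by linarith)
        have c3 : θ * (x i - z i) ≤ θ * L := mul_le_mul_of_nonneg_left (by linarith) hθ.le
        have c4 : θ * (y i - z' i) ≤ θ * L := mul_le_mul_of_nonneg_left (by linarith) hθ.le
        simp only [phiz, toR, Pi.sub_apply]
        rw [abs_le]
        constructor <;> nlinarith)
    have h2 : 2 * (θ * L) ≤ θ * nrm (toR x - toR y) := by nlinarith
    have h3 : Real.sqrt d * (2 * (θ * L)) ≤ Real.sqrt d * (θ * nrm (toR x - toR y)) :=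
      mul_le_mul_of_nonneg_left h2 (by linarith)
    nlinarith

lemma dir2 {d : ℕ} (hd : 3 ≤ d) {ε : ℝ} (hε : 0 < ε) :
    ∃ L₁ : ℕ, ∀ L : ℕ, L₁ ≤ L → 1 ≤ L → ∀ 𝒞 : Finset (Fin d → ℤ), BoxSep L 𝒞 →
      ∀ e ∈ enSet d (𝒞.biUnion (boxZ d L)),
      brInf d (⋃ z ∈ 𝒞, boxR d L z) ≤ ENNReal.ofReal ((1 + ε) / d * e) := by
  have hdr : (3:ℝ) ≤ d := by exact_mod_cast hd
  have hk := greenK_pos hd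
  set q := (1 + ε) ^ (1 / 3 : ℝ) with hq
  have hqq : q * q * q = 1 + ε := by
    have : q ^ (3:ℕ) = 1 + ε := by
      rw [hq, ← Real.rpow_natCast, ← Real.rpow_mul (by linarith)]; norm_num
    rw [← this]; ring
  have hq1 : 1 < q := Real.one_lt_rpow (by linarith) (by norm_num)
  have hq0 : 0 < q := by linarith
  obtain ⟨R, hR, HR⟩ := green_asymp hd (ε := 1 - 1 / q) (by
    have : 1 / q < 1 := by rw [div_lt_one hq0]; exact hq1
    linarith)
  obtain ⟨θ, hθ, hθ1, hκ, hκq⟩ := exists_theta d (Real.sqrt d) hq1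
  set κ := 1 - Real.sqrt d * θ with hκdef
  set N := ⌈R⌉₊ with hN
  obtain ⟨c0, -, hc0⟩ := Finset.exists_min_image
    (Finset.Icc (fun _ : Fin d => -(N:ℤ)) (fun _ => (N:ℤ))) (greenZ d)
    ⟨0, Finset.mem_Icc.2 ⟨fun i => by simp, fun i => by simp⟩⟩
  set m := greenZ d c0 with hm
  have hmpos : 0 < m := greenZ_pos hd c0
  set c := q * q / d with hc
  have hcpos : 0 < c := by positivity
  have hd2 : 0 < (d:ℝ) / 2 - 1 := by linarith
  obtain ⟨X, hX0, hX⟩ := ((Filter.eventually_gt_atTop (0:ℝ)).and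
    ((tendsto_rpow_neg_atTop hd2).eventually_le_const
      (show 0 < c * m * ((d:ℝ) / 2 - 1) by positivity))).exists
  set v : NNReal := ⟨X / 2, by positivity⟩ with hv
  have hvX : ((v:ℝ) + v) = X := by
    change X / 2 + X / 2 = X; ring
  have hv0 : 0 < v := by
    change (0:ℝ) < X / 2; positivity
  obtain ⟨r, hr0, hM0, hMq⟩ := exists_cube (d := d) v hq1
  refine ⟨⌈2 * r / θ⌉₊, fun L hL hL1 𝒞 hS e he => ?_⟩
  have hLr : 2 * r ≤ θ * L := by
    have : 2 * r / θ ≤ L := (Nat.le_ceil _).trans (by exact_mod_cast hL)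
    rwa [div_le_iff₀' hθ] at this
  have hZ : ∀ x : Fin d → ℤ, ∃ z, x ∈ 𝒞.biUnion (boxZ d L) → z ∈ 𝒞 ∧ x ∈ boxZ d L z := by
    intro x
    by_cases h : x ∈ 𝒞.biUnion (boxZ d L)
    · obtain ⟨z, hz⟩ := Finset.mem_biUnion.1 h
      exact ⟨z, fun _ => hz⟩
    · exact ⟨0, fun h' => absurd h' h⟩
  choose Z hZ using hZ
  have hmeas : MeasurableSet (⋃ z ∈ 𝒞, boxR d L z) :=
    Finset.measurableSet_biUnion _ fun z _ => measurableSet_Icc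
  have he0 := enSet_nonneg hd _ he
  have key := brown_upper hd hv0 r (𝒞.biUnion (boxZ d L)) (fun x => phiz r θ (Z x) x)
    (⋃ z ∈ 𝒞, boxR d L z) hmeas (fun x hx u hu => by
      simp only [mem_iUnion, exists_prop]
      exact ⟨Z x, (hZ x hx).1, phiz_box hθ1 hLr (hZ x hx).2 hu⟩) hM0 hcpos.le (fun x hx y hy => by
      have h1 := phiz_nrm hd hr0 hθ hθ1 hLr hS (hZ x hx).1 (hZ y hy).1 (hZ x hx).2 (hZ y hy).2
      by_cases hfar : R ≤ nrm (toR (y - x))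
      · have hpos : 0 < nrm (toR (y - x)) := hR.trans_le hfar
        have hb : toR (y - x) ≠ 0 := by
          intro h; rw [h] at hpos; simp [nrm] at hpos
        have ha : phiz r θ (Z x) x - phiz r θ (Z y) y ≠ 0 := by
          intro h; rw [h] at h1
          have : nrm (0 : Fin d → ℝ) = 0 := by simp [nrm]
          rw [this] at h1
          have := mul_pos hκ hpos
          linarith
        refine (Iv_le_gR hd v ha).trans (ENNReal.ofReal_le_ofReal ?_)
        have h2 := gR_scale hd hκ hb h1
        have h3 := (abs_le.1 (HR _ hfar)).1
        have h4 : d * gR (toR (y - x)) / q ≤ greenZ d (y - x) := by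
          have : (1 - 1 / q) * (d * gR (toR (y - x))) = d * gR (toR (y - x)) - d * gR (toR (y - x)) / q := by
            ring
          linarith
        rw [div_le_iff₀ hq0] at h4
        have h5 := gR_nonneg hd (toR (y - x))
        calc _ ≤ q * gR (toR (y - x)) := h2.trans (by gcongr)
          _ = q / d * (d * gR (toR (y - x))) := by field_simp
          _ ≤ q / d * (greenZ d (y - x) * q) := by gcongr
          _ = _ := by rw [hc]; ring
      · push Not at hfar
        refine (Iv_le_tail hd hv0 _).trans (ENNReal.ofReal_le_ofReal ?_)
        rw [hvX, div_le_iff₀ hd2, show 1 - (d:ℝ) / 2 = -((d:ℝ)/2 - 1) by ring]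
        refine hX.trans ?_
        have hin : y - x ∈ Finset.Icc (fun _ : Fin d => -(N:ℤ)) (fun _ => (N:ℤ)) := by
          have hh : ∀ i, |(y - x) i| ≤ (N:ℤ) := by
            intro i
            have h6 := (abs_le_nrm (toR (y - x)) i).trans (hfar.le.trans (Nat.le_ceil R))
            simp only [toR] at h6
            exact_mod_cast h6
          exact Finset.mem_Icc.2 ⟨fun i => (abs_le.1 (hh i)).1, fun i => (abs_le.1 (hh i)).2⟩
        have := hc0 _ hin
        gcongr) he
  refine key.trans ?_
  rw [← mul_assoc]
  calc _ ≤ ENNReal.ofReal q * ENNReal.ofReal (c * e) := by gcongr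
    _ = _ := by
      rw [← ENNReal.ofReal_mul hq0.le]
      congr 1
      rw [hc, ← hqq]; ring

lemma enSet_nonempty {d : ℕ} {F : Finset (Fin d → ℤ)} (hF : F.Nonempty) : (enSet d F).Nonempty := by
  classical
  obtain ⟨x0, hx0⟩ := hF
  refine ⟨_, fun x => if x = x0 then 1 else 0, fun x => ?_, fun x hx => ?_, ?_, rfl⟩
  · dsimp only; split_ifs <;> norm_num
  · dsimp only; rw [if_neg]; rintro rfl; exact hx hx0
  · simp [hx0]

lemma sInf_enSet_pos {d : ℕ} (hd : 3 ≤ d) {F : Finset (Fin d → ℤ)} (hF : F.Nonempty) :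
    0 < sInf (enSet d F) := by
  obtain ⟨p, -, hp⟩ := Finset.exists_min_image (F ×ˢ F) (fun p => greenZ d (p.2 - p.1))
    (hF.product hF)
  refine (greenZ_pos hd (p.2 - p.1)).trans_le (le_csInf (enSet_nonempty hF) ?_)
  rintro e ⟨w, hw0, hwF, hw1, rfl⟩
  calc greenZ d (p.2 - p.1) = ∑ x ∈ F, ∑ y ∈ F, greenZ d (p.2 - p.1) * w x * w y := by
        simp only [← Finset.mul_sum, hw1, mul_one]
    _ ≤ _ := by
        refine Finset.sum_le_sum fun x hx => Finset.sum_le_sum fun y hy => ?_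
        have := hp (x, y) (Finset.mem_product.2 ⟨hx, hy⟩)
        have h1 := hw0 x
        have h2 := hw0 y
        gcongr
/-- Proposition A.1: for every `δ > 0` there are `K₀`, `L₁` such that for
`K ≥ max(K₀,100)`, `L ≥ max(L₁,1)` and every nonempty finite `𝒞 ⊆ Lℤ^d` with points at
mutual sup-distance `≥ KL`, `1-δ ≤ d·cap_{ℤ^d}(C)/cap(Γ) ≤ 1+δ`, where `C` is the union of
the boxes `B_z`, `z ∈ 𝒞`, and `Γ` the union of their `ℝ^d`-fillings. -/
theorem statement19 (d : ℕ) (hd : 3 ≤ d) (δ : ℝ) (hδ : 0 < δ) :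
    ∃ K₀ L₁ : ℕ, ∀ K L : ℕ, K₀ ≤ K → L₁ ≤ L → 100 ≤ K → 1 ≤ L →
    ∀ 𝒞 : Finset (Fin d → ℤ), 𝒞.Nonempty →
      (∀ z ∈ 𝒞, ∀ i, (L : ℤ) ∣ z i) →
      (∀ z ∈ 𝒞, ∀ z' ∈ 𝒞, z ≠ z' → ∃ i, ((K * L : ℕ) : ℤ) ≤ |z i - z' i|) →
      1 - δ ≤ (d : ℝ) * discCap d (𝒞.biUnion (boxZ d L)) /
          (brCap d (⋃ z ∈ 𝒞, boxR d L z)).toReal ∧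
      (d : ℝ) * discCap d (𝒞.biUnion (boxZ d L)) /
          (brCap d (⋃ z ∈ 𝒞, boxR d L z)).toReal ≤ 1 + δ := by
  obtain ⟨L₁, H1⟩ := dir1 hd hδ
  obtain ⟨L₂, H2⟩ := dir2 hd hδ
  refine ⟨0, max L₁ L₂, fun K L _ hL hK hL1 𝒞 h𝒞 _ hsep => ?_⟩
  have hdr : (3:ℝ) ≤ d := by exact_mod_cast hd
  have hS : BoxSep L 𝒞 := by
    intro z hz z' hz' hne
    obtain ⟨i, hi⟩ := hsep z hz z' hz' hne
    refine ⟨i, ?_⟩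
    have h1 : ((100 * L : ℕ) : ℤ) ≤ |z i - z' i| :=
      le_trans (by exact_mod_cast Nat.mul_le_mul_right L hK) hi
    exact_mod_cast h1
  set F := 𝒞.biUnion (boxZ d L) with hF
  set Γ := ⋃ z ∈ 𝒞, boxR d L z with hΓ
  have hFne : F.Nonempty := by
    obtain ⟨z, hz⟩ := h𝒞
    refine ⟨z, Finset.mem_biUnion.2 ⟨z, hz, ?_⟩⟩
    rw [boxZ, Finset.mem_Icc]
    refine ⟨le_rfl, fun i => ?_⟩
    have : (1:ℤ) ≤ L := by exact_mod_cast hL1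
    change z i ≤ z i + L - 1
    linarith
  have hD := sInf_enSet_pos hd hFne
  have hdc : discCap d F = (sInf (enSet d F))⁻¹ := rfl
  have hbc : brCap d Γ = (brInf d Γ)⁻¹ := rfl
  set D := sInf (enSet d F) with hDdef
  have G1 := H1 L ((le_max_left _ _).trans hL) hL1 𝒞 hS
  have G2 := H2 L ((le_max_right _ _).trans hL) hL1 𝒞 hS
  have hBtop : brInf d Γ ≠ ⊤ := by
    obtain ⟨e, he⟩ := enSet_nonempty hFne
    exact ne_top_of_le_ne_top ENNReal.ofReal_ne_top (G2 e he)
  set b := (brInf d Γ).toReal with hb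
  have hBb : brInf d Γ = ENNReal.ofReal b := (ENNReal.ofReal_toReal hBtop).symm
  have hc : 0 < (1 + δ) * d := by positivity
  have hc' : ENNReal.ofReal ((1 + δ) * d) ≠ 0 := by simpa using hc
  have hb0 : 0 ≤ b := ENNReal.toReal_nonneg
  have h1 : D ≤ (1 + δ) * d * b := by
    have : ENNReal.ofReal D / ENNReal.ofReal ((1 + δ) * d) ≤ brInf d Γ := by
      refine le_iInf₂ fun μ hμ => ?_
      rw [ENNReal.div_le_iff' hc' ENNReal.ofReal_ne_top]
      exact G1 μ hμ.1 hμ.2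
    rw [ENNReal.div_le_iff' hc' ENNReal.ofReal_ne_top, hBb, ← ENNReal.ofReal_mul hc.le] at this
    exact (ENNReal.ofReal_le_ofReal_iff (by positivity)).1 this
  have h2 : b ≤ (1 + δ) / d * D := by
    have : b / ((1 + δ) / d) ≤ D := by
      refine le_csInf (enSet_nonempty hFne) fun e he => ?_
      have h := G2 e he
      have he0 := enSet_nonneg hd F he
      rw [← hΓ, hBb, ENNReal.ofReal_le_ofReal_iff (by positivity)] at h
      rw [div_le_iff₀' (by positivity)]
      exact h
    rwa [div_le_iff₀' (by positivity)] at this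
  have hbpos : 0 < b := by
    by_contra hcon
    have : b = 0 := le_antisymm (not_lt.1 hcon) hb0
    rw [this] at h1
    linarith
  have hratio : (d:ℝ) * discCap d F / (brCap d Γ).toReal = d * b / D := by
    rw [hdc, hbc, ENNReal.toReal_inv, ← hb]
    field_simp
  rw [hratio]
  constructor
  · rw [le_div_iff₀ hD]
    have h3 : (1 - δ) * D ≤ D / (1 + δ) := by
      rw [le_div_iff₀ (by linarith)]
      nlinarith [mul_pos hδ hδ]
    have h4 : D / (1 + δ) ≤ d * b := by
      rw [div_le_iff₀ (by linarith)]
      linarith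
    linarith
  · rw [div_le_iff₀ hD]
    calc (d:ℝ) * b ≤ d * ((1 + δ) / d * D) := by gcongr
      _ = _ := by field_simp
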